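/- Let n ≥ 4 and let Γ be a finite index subgroup of Aut(F_n) that contains IA_n. Then both Γ and its commutator subgroup [Γ,Γ] have finite abelianizations. In particular, every group homomorphism Γ → (ℝ,+) is trivial and every group homomorphism [Γ,Γ] → (ℝ,+) is trivial. -/

import Mathlib

noncomputable section

/-- The free group of rank `n`. -/
abbrev FreeGrp (n : ℕ) : Type := FreeGroup (Fin n)

/-- The automorphism group `Aut(Fₙ)`. -/
abbrev AutF (n : ℕ) : Type := MulAut (FreeGrp n)

/-- The subgroup `IAₙ ≤ Aut(Fₙ)` of automorphisms acting trivially on the abelianization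
`Fₙ^{ab} ≅ ℤⁿ`, i.e. the kernel of the natural map `Aut(Fₙ) → Aut(ℤⁿ)`. -/
def IA (n : ℕ) : Subgroup (AutF n) where
  carrier := {e | ∀ x : FreeGrp n, Abelianization.of (e x) = Abelianization.of x}
  one_mem' := fun _ => rfl
  mul_mem' := by
    intro a b ha hb x
    have h : (a * b) x = a (b x) := rfl
    rw [h, ha (b x), hb x]
  inv_mem' := by
    intro a ha x
    have h := ha (a⁻¹ x)
    have h' : a (a⁻¹ x) = x := a.apply_symm_apply x
    rw [h'] at h
    exact h.symm

namespace FA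

open FreeGroup (of)
set_option linter.unusedSectionVars false

section P0
variable {ι : Type*} [DecidableEq ι]

abbrev B (i : ι) : Type _ := FreeGroup {j : ι // j ≠ i}

/-- inclusion of the sub free group avoiding one letter -/
def inc (i : ι) : B i →* FreeGroup ι := FreeGroup.map Subtype.val

@[simp] theorem inc_of (i : ι) (j : {j : ι // j ≠ i}) : inc i (of j) = of j.1 := by
  simp [inc]

theorem autExt {α β : MulAut (FreeGroup ι)} (h : ∀ j, α (of j) = β (of j)) : α = β := by
  apply MulEquiv.toMonoidHom_injective
  exact FreeGroup.ext_hom _ _ (fun j => h j)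

def tvHom (i : ι) (p : B i × B i) : FreeGroup ι →* FreeGroup ι :=
  FreeGroup.lift fun j => if j = i then (inc i p.1)⁻¹ * of i * inc i p.2 else of j

theorem tvHom_inc (i : ι) (p : B i × B i) (w : B i) : tvHom i p (inc i w) = inc i w := by
  have : (tvHom i p).comp (inc i) = inc i := by
    apply FreeGroup.ext_hom
    intro j
    simp [tvHom, j.2]
  exact DFunLike.congr_fun this w

theorem tvHom_comp (i : ι) (p q : B i × B i) : (tvHom i p).comp (tvHom i q) = tvHom i (p * q) := by
  apply FreeGroup.ext_hom
  intro j
  by_cases h : j = i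
  · subst h
    have h1 : ∀ r : B j × B j, tvHom j r (of j) = (inc j r.1)⁻¹ * of j * inc j r.2 := by
      intro r; simp [tvHom]
    simp only [MonoidHom.comp_apply, h1, map_mul, map_inv, tvHom_inc]
    simp [mul_assoc]
  · simp [tvHom, h]

theorem tvHom_one (i : ι) : tvHom i (1 : B i × B i) = MonoidHom.id _ := by
  apply FreeGroup.ext_hom
  intro j
  by_cases h : j = i
  · subst h; simp [tvHom]
  · simp [tvHom, h]

def tv (i : ι) : B i × B i →* MulAut (FreeGroup ι) where
  toFun p := MonoidHom.toMulEquiv (tvHom i p) (tvHom i p⁻¹)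
    (by rw [tvHom_comp]; simp [tvHom_one]) (by rw [tvHom_comp]; simp [tvHom_one])
  map_one' := by
    ext x
    exact DFunLike.congr_fun (tvHom_one i) x
  map_mul' p q := by
    ext x
    exact (DFunLike.congr_fun (tvHom_comp i p q) x).symm

theorem tv_apply (i : ι) (p : B i × B i) (x) : tv i p x = tvHom i p x := rfl

@[simp] theorem tv_same (i : ι) (p : B i × B i) :
    tv i p (of i) = (inc i p.1)⁻¹ * of i * inc i p.2 := by
  simp [tv_apply, tvHom]

theorem tv_ne {i j : ι} (h : j ≠ i) (p : B i × B i) : tv i p (of j) = of j := by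
  simp [tv_apply, tvHom, h]

@[simp] theorem tv_inc (i : ι) (p : B i × B i) (w : B i) : tv i p (inc i w) = inc i w :=
  tvHom_inc i p w

/-- right transvection -/
def rho (i : ι) : B i →* MulAut (FreeGroup ι) := (tv i).comp (MonoidHom.inr _ _)
def lam (i : ι) : B i →* MulAut (FreeGroup ι) := (tv i).comp (MonoidHom.inl _ _)
def dl (i : ι) : B i →* MulAut (FreeGroup ι) :=
  (tv i).comp ((MonoidHom.id _).prod (MonoidHom.id _))

theorem rho_eq (i : ι) (w : B i) : rho i w = tv i (1, w) := rfl
theorem lam_eq (i : ι) (w : B i) : lam i w = tv i (w, 1) := rfl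
theorem dl_eq (i : ι) (w : B i) : dl i w = tv i (w, w) := rfl

theorem dl_eq_mul (i : ι) (w : B i) : dl i w = lam i w * rho i w := by
  rw [dl_eq, lam_eq, rho_eq, ← map_mul]; simp

@[simp] theorem rho_same (i : ι) (w : B i) : rho i w (of i) = of i * inc i w := by
  simp [rho_eq]
theorem rho_ne {i j : ι} (h : j ≠ i) (w : B i) : rho i w (of j) = of j := tv_ne h _
@[simp] theorem rho_inc (i : ι) (p : B i) (w : B i) : rho i p (inc i w) = inc i w :=
  tvHom_inc i _ w
@[simp] theorem dl_same (i : ι) (w : B i) : dl i w (of i) = (inc i w)⁻¹ * of i * inc i w := by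
  simp [dl_eq]
theorem dl_ne {i j : ι} (h : j ≠ i) (w : B i) : dl i w (of j) = of j := tv_ne h _
@[simp] theorem dl_inc (i : ι) (p : B i) (w : B i) : dl i p (inc i w) = inc i w :=
  tvHom_inc i _ w

/-- generator of the smaller free group -/
def g' {i j : ι} (h : j ≠ i) : B i := of ⟨j, h⟩
@[simp] theorem inc_g {i j : ι} (h : j ≠ i) : inc i (g' h) = of j := by simp [g']

def R {i j : ι} (h : j ≠ i) : MulAut (FreeGroup ι) := rho i (g' h)
def Lt {i j : ι} (h : j ≠ i) : MulAut (FreeGroup ι) := lam i (g' h)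
def K {i j : ι} (h : j ≠ i) : MulAut (FreeGroup ι) := dl i (g' h)

/-- extension of automorphisms fixing the letter `i` -/
def extHom (i : ι) (ν : MulAut (B i)) : FreeGroup ι →* FreeGroup ι :=
  FreeGroup.lift fun j => if h : j ≠ i then inc i (ν (of ⟨j, h⟩)) else of j

theorem extHom_inc (i : ι) (ν : MulAut (B i)) (w : B i) : extHom i ν (inc i w) = inc i (ν w) := by
  have : (extHom i ν).comp (inc i) = (inc i).comp ν.toMonoidHom := by
    apply FreeGroup.ext_hom
    intro j
    simp [extHom, j.2]
  exact DFunLike.congr_fun this w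

theorem extHom_same (i : ι) (ν : MulAut (B i)) : extHom i ν (of i) = of i := by
  simp [extHom]

theorem hom_ext_i (i : ι) {H : Type*} [Group H] {a b : FreeGroup ι →* H} (h : a (of i) = b (of i))
    (h2 : ∀ w, a (inc i w) = b (inc i w)) : a = b := by
  apply FreeGroup.ext_hom
  intro j
  by_cases hj : j = i
  · subst hj; exact h
  · simpa using h2 (of ⟨j, hj⟩)

theorem autExt_i (i : ι) {α β : MulAut (FreeGroup ι)} (h : α (of i) = β (of i))
    (h2 : ∀ w, α (inc i w) = β (inc i w)) : α = β := by
  apply MulEquiv.toMonoidHom_injective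
  exact hom_ext_i i h h2

theorem extHom_comp (i : ι) (a b : MulAut (B i)) :
    (extHom i a).comp (extHom i b) = extHom i (a * b) := by
  apply hom_ext_i i
  · simp [extHom_same]
  · intro w; simp [extHom_inc]

theorem extHom_one (i : ι) : extHom i 1 = MonoidHom.id _ := by
  apply hom_ext_i i
  · simp [extHom_same]
  · intro w; simp [extHom_inc]

def ext (i : ι) : MulAut (B i) →* MulAut (FreeGroup ι) where
  toFun p := MonoidHom.toMulEquiv (extHom i p) (extHom i p⁻¹)
    (by rw [extHom_comp]; simp [extHom_one]) (by rw [extHom_comp]; simp [extHom_one])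
  map_one' := by
    ext x
    exact DFunLike.congr_fun (extHom_one i) x
  map_mul' p q := by
    ext x
    exact (DFunLike.congr_fun (extHom_comp i p q) x).symm

@[simp] theorem ext_same (i : ι) (ν : MulAut (B i)) : ext i ν (of i) = of i := extHom_same i ν
@[simp] theorem ext_inc (i : ι) (ν : MulAut (B i)) (w : B i) :
    ext i ν (inc i w) = inc i (ν w) := extHom_inc i ν w

theorem ext_of {i j : ι} (h : j ≠ i) (ν : MulAut (B i)) : ext i ν (of j) = inc i (ν (g' h)) := by
  rw [← ext_inc, inc_g]

theorem ext_tv (i : ι) (ν : MulAut (B i)) (u v : B i) :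
    ext i ν * tv i (u, v) = tv i (ν u, ν v) * ext i ν := by
  apply autExt_i i
  · simp
  · intro w; simp

theorem ext_rho (i : ι) (ν : MulAut (B i)) (v : B i) :
    ext i ν * rho i v * (ext i ν)⁻¹ = rho i (ν v) := by
  rw [mul_inv_eq_iff_eq_mul, rho_eq, ext_tv]; simp [rho_eq]

theorem ext_dl (i : ι) (ν : MulAut (B i)) (v : B i) :
    ext i ν * dl i v * (ext i ν)⁻¹ = dl i (ν v) := by
  rw [mul_inv_eq_iff_eq_mul, dl_eq, ext_tv]; simp [dl_eq]

theorem ext_lam (i : ι) (ν : MulAut (B i)) (v : B i) :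
    ext i ν * lam i v * (ext i ν)⁻¹ = lam i (ν v) := by
  rw [mul_inv_eq_iff_eq_mul, lam_eq, ext_tv]; simp [lam_eq]

theorem conj_conj (s : MulAut (FreeGroup ι)) (w : FreeGroup ι) :
    s * MulAut.conj w * s⁻¹ = MulAut.conj (s w) := by
  rw [mul_inv_eq_iff_eq_mul]
  ext x
  simp

theorem dl_rho (i : ι) (b c : B i) :
    dl i b * rho i c * (dl i b)⁻¹ = rho i (b * c * b⁻¹) := by
  rw [dl_eq, rho_eq, rho_eq, ← map_mul, ← map_inv, ← map_mul]; simp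

theorem lam_rho_comm (i : ι) (b c : B i) : lam i b * rho i c = rho i c * lam i b := by
  rw [lam_eq, rho_eq, ← map_mul, ← map_mul]; simp

theorem ext_conj (i : ι) (w : B i) :
    ext i (MulAut.conj w) = MulAut.conj (inc i w) * dl i w := by
  apply autExt_i i
  · simp [mul_assoc]
  · intro v; simp

theorem ext_R {i j k : ι} (hj : j ≠ i) (hk : k ≠ i) (h : k ≠ j) :
    ext i (R (i := (⟨j, hj⟩ : {x // x ≠ i})) (j := ⟨k, hk⟩) (by simpa using h)) = R h := by
  apply autExt
  intro l
  by_cases hl : l = i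
  · subst hl; simp [R, rho_ne hj.symm]
  · rw [ext_of hl, g']
    by_cases hlj : l = j
    · subst hlj; simp [R]
    · simp only [R]
      rw [rho_ne (by simpa using hlj), rho_ne hlj]; simp

theorem ext_K {i j k : ι} (hj : j ≠ i) (hk : k ≠ i) (h : k ≠ j) :
    ext i (K (i := (⟨j, hj⟩ : {x // x ≠ i})) (j := ⟨k, hk⟩) (by simpa using h)) = K h := by
  apply autExt
  intro l
  by_cases hl : l = i
  · subst hl; simp [K, dl_ne hj.symm]
  · rw [ext_of hl, g']
    by_cases hlj : l = j
    · subst hlj; simp [K]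
    · simp only [K]
      rw [dl_ne (by simpa using hlj), dl_ne hlj]; simp

@[simp] theorem R_same {i j : ι} (h : j ≠ i) : R h (of i) = of i * of j := by simp [R]
theorem R_ne {i j k : ι} (h : j ≠ i) (hk : k ≠ i) : R h (of k) = of k := rho_ne hk _
@[simp] theorem K_same {i j : ι} (h : j ≠ i) : K h (of i) = (of j)⁻¹ * of i * of j := by simp [K]
theorem K_ne {i j k : ι} (h : j ≠ i) (hk : k ≠ i) : K h (of k) = of k := dl_ne hk _
@[simp] theorem Lt_same {i j : ι} (h : j ≠ i) : Lt h (of i) = (of j)⁻¹ * of i := by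
  simp [Lt, lam_eq]
theorem Lt_ne {i j k : ι} (h : j ≠ i) (hk : k ≠ i) : Lt h (of k) = of k := tv_ne hk _

theorem R_pow {i j : ι} (h : j ≠ i) (m : ℕ) : R h ^ m = rho i (g' h ^ m) := by
  rw [R, map_pow]

end P0

end FA

namespace FA

open FreeGroup (of)
set_option linter.unusedSectionVars false

section P1a
variable {ι : Type*} [DecidableEq ι]

theorem split_prefix {α : Type*} (l m : List α) : ∃ p a b, l = p ++ a ∧ m = p ++ b ∧
    (∀ x ∈ a.head?, ∀ y ∈ b.head?, x ≠ y) := by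
  classical
  induction l generalizing m with
  | nil => exact ⟨[], [], m, by simp⟩
  | cons x l ih =>
    cases m with
    | nil => exact ⟨[], x :: l, [], by simp⟩
    | cons y m =>
      by_cases h : x = y
      · subst h
        obtain ⟨p, a, b, h1, h2, h3⟩ := ih m
        exact ⟨x :: p, a, b, by simp [h1], by simp [h2], h3⟩
      · exact ⟨[], x :: l, y :: m, by simp, by simp, by simpa using h⟩

theorem norm_split {u v : FreeGroup ι} {p a b : List (ι × Bool)} (hu : u.toWord = p ++ a)
    (hv : v.toWord = p ++ b) (h : ∀ x ∈ a.head?, ∀ y ∈ b.head?, x ≠ y) :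
    (u⁻¹ * v).norm = a.length + b.length := by
  have hu' : u = FreeGroup.mk p * FreeGroup.mk a := by
    rw [FreeGroup.mul_mk, ← hu, FreeGroup.mk_toWord]
  have hv' : v = FreeGroup.mk p * FreeGroup.mk b := by
    rw [FreeGroup.mul_mk, ← hv, FreeGroup.mk_toWord]
  have ha : FreeGroup.IsReduced a := (hu ▸ FreeGroup.isReduced_toWord (x := u)).infix
    (List.suffix_append p a).isInfix
  have hb : FreeGroup.IsReduced b := (hv ▸ FreeGroup.isReduced_toWord (x := v)).infix
    (List.suffix_append p b).isInfix
  have h1 : u⁻¹ * v = FreeGroup.mk (FreeGroup.invRev a ++ b) := by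
    rw [← FreeGroup.mul_mk, ← FreeGroup.inv_mk, hu', hv']; group
  have ha' : FreeGroup.IsReduced (FreeGroup.invRev a) := by
    have := FreeGroup.isReduced_toWord (x := (FreeGroup.mk a)⁻¹)
    rwa [FreeGroup.toWord_inv, FreeGroup.toWord_mk, ha.reduce_eq] at this
  have h2 : FreeGroup.IsReduced (FreeGroup.invRev a ++ b) := by
    rw [FreeGroup.IsReduced, List.isChain_append]
    refine ⟨ha', hb, ?_⟩
    intro x hx y hy hxy
    cases a with
    | nil => simp [FreeGroup.invRev] at hx
    | cons z a =>
      simp [FreeGroup.invRev] at hx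
      have := h z (by simp) y hy
      subst hx
      simp at hxy ⊢
      by_contra hc
      apply this
      ext
      · exact hxy
      · revert hc; cases z.2 <;> cases y.2 <;> simp
  rw [h1, FreeGroup.norm, FreeGroup.toWord_mk, h2.reduce_eq]
  simp

/-- Gromov product -/
def cc (u v : FreeGroup ι) : ℕ := (u.norm + v.norm - (u⁻¹ * v).norm) / 2

theorem cc_split {u v : FreeGroup ι} {p a b : List (ι × Bool)} (hu : u.toWord = p ++ a)
    (hv : v.toWord = p ++ b) (h : ∀ x ∈ a.head?, ∀ y ∈ b.head?, x ≠ y) :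
    cc u v = p.length := by
  have h1 : u.norm = p.length + a.length := by simp [FreeGroup.norm, hu]
  have h2 : v.norm = p.length + b.length := by simp [FreeGroup.norm, hv]
  rw [cc, norm_split hu hv h, h1, h2]; omega

theorem cc_spec (u v : FreeGroup ι) : 2 * cc u v + (u⁻¹ * v).norm = u.norm + v.norm := by
  obtain ⟨p, a, b, hu, hv, h⟩ := split_prefix u.toWord v.toWord
  have h1 : u.norm = p.length + a.length := by simp [FreeGroup.norm, hu]
  have h2 : v.norm = p.length + b.length := by simp [FreeGroup.norm, hv]
  rw [cc_split hu hv h, norm_split hu hv h, h1, h2]; omega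

theorem le_cc {u v : FreeGroup ι} {k : ℕ} : k ≤ cc u v ↔
    k ≤ u.norm ∧ k ≤ v.norm ∧ u.toWord.take k = v.toWord.take k := by
  obtain ⟨p, a, b, hu, hv, h⟩ := split_prefix u.toWord v.toWord
  have h1 : u.norm = p.length + a.length := by simp [FreeGroup.norm, hu]
  have h2 : v.norm = p.length + b.length := by simp [FreeGroup.norm, hv]
  rw [cc_split hu hv h, h1, h2, hu, hv]
  constructor
  · intro hk
    refine ⟨by omega, by omega, ?_⟩
    rw [List.take_append_of_le_length hk, List.take_append_of_le_length hk]
  · rintro ⟨ha, hb, hab⟩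
    by_contra hk
    cases a with
    | nil => simp at ha; omega
    | cons x a =>
      cases b with
      | nil => simp at hb; omega
      | cons y b =>
        have := congrArg (fun l => l[p.length]?) hab
        simp [List.getElem?_take, show p.length < k by omega] at this
        exact h x (by simp) y (by simp) this

theorem cc_comm (u v : FreeGroup ι) : cc u v = cc v u := by
  apply le_antisymm
  · obtain ⟨a, b, c⟩ := le_cc.1 (le_refl (cc u v)); exact le_cc.2 ⟨b, a, c.symm⟩
  · obtain ⟨a, b, c⟩ := le_cc.1 (le_refl (cc v u)); exact le_cc.2 ⟨b, a, c.symm⟩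

theorem cc_ultra {u v w : FreeGroup ι} {k : ℕ} (h1 : k ≤ cc u v) (h2 : k ≤ cc v w) :
    k ≤ cc u w := by
  obtain ⟨a, b, c⟩ := le_cc.1 h1
  obtain ⟨d, e, f⟩ := le_cc.1 h2
  exact le_cc.2 ⟨a, e, c.trans f⟩

theorem cc_eq_of_lt {u v w : FreeGroup ι} (h : cc u v < cc v w) : cc u w = cc u v := by
  apply le_antisymm
  · by_contra hc
    have h1 : cc u v + 1 ≤ cc u w := by omega
    have h2 : cc u v + 1 ≤ cc w v := by rw [cc_comm w v]; omega
    have := cc_ultra h1 h2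
    omega
  · exact cc_ultra le_rfl h.le

theorem cc_inv_self {u : FreeGroup ι} (h : u ≠ 1) : 2 * cc u u⁻¹ < u.norm := by
  by_contra hc
  push Not at hc
  obtain ⟨h1, h2, h3⟩ := le_cc.1 (le_refl (cc u u⁻¹))
  have hpos : 0 < u.norm := by
    rcases Nat.eq_zero_or_pos u.norm with h0 | h0
    · exact absurd (FreeGroup.norm_eq_zero.1 h0) h
    · exact h0
  set k := cc u u⁻¹ with hk
  have key : ∀ t, t < k → u.toWord[t]? = (FreeGroup.invRev u.toWord)[t]? := by
    intro t ht
    have := congrArg (fun l => l[t]?) h3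
    simpa [List.getElem?_take, ht, FreeGroup.toWord_inv] using this
  have key2 : ∀ t (ht : t < u.toWord.length), (FreeGroup.invRev u.toWord)[t]? =
      some ((u.toWord[u.toWord.length - 1 - t]).1, !(u.toWord[u.toWord.length - 1 - t]).2) := by
    intro t ht
    rw [FreeGroup.invRev, List.getElem?_reverse (by simpa using ht)]
    simp only [List.length_map, List.getElem?_map]
    rw [List.getElem?_eq_getElem (by omega)]; rfl
  have hn : u.norm = u.toWord.length := rfl
  rcases Nat.even_or_odd' u.norm with ⟨m, hm | hm⟩
  · have e := key (m - 1) (by omega)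
    rw [key2 _ (by omega), List.getElem?_eq_getElem (by omega)] at e
    have red := FreeGroup.isReduced_toWord (x := u)
    rw [FreeGroup.IsReduced, List.isChain_iff_getElem] at red
    have := red (m - 1) (by omega)
    simp only [Option.some.injEq] at e
    have e2 : u.toWord.length - 1 - (m - 1) = m - 1 + 1 := by omega
    simp only [e2] at e
    rw [e] at this
    simp at this
  · have e := key m (by omega)
    rw [key2 _ (by omega), List.getElem?_eq_getElem (by omega)] at e
    simp only [Option.some.injEq] at e
    have e2 : u.toWord.length - 1 - m = m := by omega
    simp only [e2] at e
    have := congrArg Prod.snd e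
    simp at this

/-- inverse letter -/
def bar (s : ι × Bool) : ι × Bool := (s.1, !s.2)

@[simp] theorem bar_bar (s : ι × Bool) : bar (bar s) = s := by simp [bar]

/-- product along a word -/
def pr (u : ι × Bool → FreeGroup ι) (l : List (ι × Bool)) : FreeGroup ι := (l.map u).prod

theorem nielsen_words (u : ι × Bool → FreeGroup ι) (hne : ∀ s, u s ≠ 1)
    (hinv : ∀ s, u (bar s) = (u s)⁻¹)
    (N1 : ∀ s t, t ≠ bar s → 2 * cc (u s)⁻¹ (u t) ≤ (u t).norm)
    (N2 : ∀ r s t, s ≠ bar r → t ≠ bar s → cc (u r)⁻¹ (u s) + cc (u s)⁻¹ (u t) < (u s).norm)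
    (s : ι × Bool) (l : List (ι × Bool)) (hl : FreeGroup.IsReduced (s :: l)) :
    (∀ r, s ≠ bar r → cc (u r)⁻¹ (pr u (s :: l)) = cc (u r)⁻¹ (u s)) ∧
    (u s).norm ≤ (pr u (s :: l)).norm ∧ (∀ t ∈ s :: l, (u t).norm ≤ (pr u (s :: l)).norm) := by
  induction l generalizing s with
  | nil => simp [pr]
  | cons t l ih =>
    have hst : t ≠ bar s := by
      rw [FreeGroup.IsReduced, List.isChain_cons_cons] at hl
      rintro rfl
      have := hl.1 rfl
      simp [bar] at this
    have hl' : FreeGroup.IsReduced (t :: l) := by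
      rw [FreeGroup.IsReduced, List.isChain_cons_cons] at hl; exact hl.2
    obtain ⟨i1, i2, i3⟩ := ih t hl'
    set q := pr u (t :: l) with hq
    have hp : pr u (s :: t :: l) = u s * q := by simp [pr, hq]
    rw [hp]
    have c1 := i1 s hst
    have e1 := cc_spec (u s)⁻¹ q
    have e2 := cc_spec (u s) (u s * q)
    simp only [inv_inv, inv_mul_cancel_left, FreeGroup.norm_inv_eq] at e1 e2
    have n1 := N1 s t hst
    have n1' := N1 (bar t) (bar s) (by rintro h; apply hst; simpa using h.symm)
    simp only [hinv, inv_inv, FreeGroup.norm_inv_eq] at n1'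
    rw [cc_comm] at n1'
    refine ⟨?_, by omega, ?_⟩
    · intro r hr
      apply cc_eq_of_lt
      have := N2 r s t hr hst
      omega
    · intro x hx
      rcases List.mem_cons.1 hx with rfl | hx
      · omega
      · have := i3 x hx; omega

theorem nielsen_basis (α : MulAut (FreeGroup ι))
    (N1 : ∀ s t, t ≠ bar s → 2 * cc (α (FreeGroup.mk [s]))⁻¹ (α (FreeGroup.mk [t])) ≤
      (α (FreeGroup.mk [t])).norm)
    (N2 : ∀ r s t, s ≠ bar r → t ≠ bar s → cc (α (FreeGroup.mk [r]))⁻¹ (α (FreeGroup.mk [s])) +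
      cc (α (FreeGroup.mk [s]))⁻¹ (α (FreeGroup.mk [t])) < (α (FreeGroup.mk [s])).norm)
    (i : ι) : (α (of i)).norm ≤ 1 := by
  by_contra hc
  have hpr : ∀ l, pr (fun s => α (FreeGroup.mk [s])) l = α (FreeGroup.mk l) := by
    intro l
    induction l with
    | nil => simp [pr, ← FreeGroup.one_eq_mk]
    | cons a l ih =>
      rw [show FreeGroup.mk (a :: l) = FreeGroup.mk [a] * FreeGroup.mk l by simp, map_mul, ← ih]
      simp [pr]
  have hne : ∀ s : ι × Bool, FreeGroup.mk [s] ≠ 1 := by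
    intro s h
    have := congrArg FreeGroup.norm h
    simp [FreeGroup.norm, FreeGroup.toWord_mk] at this
  let χ : FreeGroup ι →* ℤˣ := FreeGroup.lift fun k => if k = i then -1 else 1
  have key : ∀ j, χ (α⁻¹ (of j)) = 1 := by
    intro j
    set l := (α⁻¹ (of j)).toWord with hl
    have hmk : FreeGroup.mk l = α⁻¹ (of j) := FreeGroup.mk_toWord
    have hred : FreeGroup.IsReduced l := FreeGroup.isReduced_toWord
    have hletters : ∀ t ∈ l, (α (FreeGroup.mk [t])).norm ≤ 1 := by
      cases hcase : l with
      | nil => simp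
      | cons s l' =>
        have := (nielsen_words (fun s => α (FreeGroup.mk [s])) (by simpa using hne)
          (by intro s; rw [← map_inv]; simp [bar, FreeGroup.inv_mk, FreeGroup.invRev])
          N1 N2 s l' (hcase ▸ hred)).2.2
        intro t ht
        have h := this t ht
        rw [hpr, ← hcase, hmk] at h
        simpa using h
    have : ∀ l : List (ι × Bool), (∀ t ∈ l, (α (FreeGroup.mk [t])).norm ≤ 1) →
        χ (FreeGroup.mk l) = 1 := by
      intro l
      induction l with
      | nil => intro _; simp [← FreeGroup.one_eq_mk]
      | cons a l ih =>
        intro h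
        rw [show FreeGroup.mk (a :: l) = FreeGroup.mk [a] * FreeGroup.mk l by simp, map_mul,
          ih (fun t ht => h t (by simp [ht])), mul_one]
        have ha := h a (by simp)
        have hai : a.1 ≠ i := by
          rintro rfl
          apply hc
          rcases a with ⟨k, _ | _⟩
          · have : FreeGroup.mk [(k, false)] = (of k)⁻¹ := by
              simp [of, FreeGroup.inv_mk, FreeGroup.invRev]
            rw [this, map_inv, FreeGroup.norm_inv_eq] at ha; exact ha
          · exact ha
        rcases a with ⟨k, _ | _⟩
        · have : FreeGroup.mk [(k, false)] = (of k)⁻¹ := by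
            simp [of, FreeGroup.inv_mk, FreeGroup.invRev]
          rw [this, map_inv]; simp at hai; simp [χ, hai]
        · have : FreeGroup.mk [(k, true)] = of k := rfl
          rw [this]; simp at hai; simp [χ, hai]
    rw [← hmk]; exact this l hletters
  have h1 : χ.comp (α⁻¹ : MulAut (FreeGroup ι)).toMonoidHom = 1 := by
    apply FreeGroup.ext_hom; intro j; exact key j
  have h2 := DFunLike.congr_fun h1 (α (of i))
  simp [χ] at h2

end P1a

end FA

namespace FA

open FreeGroup (of)
set_option linter.unusedSectionVars false

section P1b
variable {ι : Type*} [DecidableEq ι]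

/-- subgroup generated by the transvections -/
def E (ι : Type*) [DecidableEq ι] : Subgroup (MulAut (FreeGroup ι)) :=
  Subgroup.closure {g | ∃ (i j : ι) (h : j ≠ i), g = R h ∨ g = Lt h}

theorem R_mem_E {i j : ι} (h : j ≠ i) : R h ∈ E ι := Subgroup.subset_closure ⟨i, j, h, Or.inl rfl⟩
theorem Lt_mem_E {i j : ι} (h : j ≠ i) : Lt h ∈ E ι := Subgroup.subset_closure ⟨i, j, h, Or.inr rfl⟩

theorem mk_false (k : ι) : FreeGroup.mk [(k, false)] = (of k)⁻¹ := by
  simp [of, FreeGroup.inv_mk, FreeGroup.invRev]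
theorem mk_true (k : ι) : FreeGroup.mk [(k, true)] = of k := rfl

theorem mk_bar (s : ι × Bool) : FreeGroup.mk [bar s] = (FreeGroup.mk [s])⁻¹ := by
  simp [bar, FreeGroup.inv_mk, FreeGroup.invRev]

theorem inv_fix {α : MulAut (FreeGroup ι)} {x : FreeGroup ι} (h : α x = x) : α⁻¹ x = x := by
  conv_lhs => rw [← h]
  simp

theorem move (s t : ι × Bool) (h : t.1 ≠ s.1) : ∃ e ∈ E ι,
    e (FreeGroup.mk [s]) = FreeGroup.mk [s] * FreeGroup.mk [t] ∧ ∀ k, k ≠ s.1 → e (of k) = of k := by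
  rcases s with ⟨i, _ | _⟩ <;> rcases t with ⟨j, _ | _⟩ <;> simp only [mk_false, mk_true] <;>
    simp only at h
  · refine ⟨(Lt h)⁻¹, inv_mem (Lt_mem_E h), ?_, fun k hk => inv_fix (Lt_ne h hk)⟩
    rw [← (Lt h).injective.eq_iff]
    simp [Lt_ne h h]
  · refine ⟨(Lt h), (Lt_mem_E h), ?_, fun k hk => (Lt_ne h hk)⟩
    simp
  · refine ⟨(R h)⁻¹, inv_mem (R_mem_E h), ?_, fun k hk => inv_fix (R_ne h hk)⟩
    rw [← (R h).injective.eq_iff]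
    simp [R_ne h h]
  · refine ⟨(R h), (R_mem_E h), ?_, fun k hk => (R_ne h hk)⟩
    simp

variable [Fintype ι]

def dig (s : ι × Bool) : ℕ := Fintype.equivFin (ι × Bool) s

def val (l : List (ι × Bool)) : ℕ := Nat.ofDigits (Fintype.card (ι × Bool) + 2) (l.map dig)

theorem val_append (l m : List (ι × Bool)) :
    val (l ++ m) = val l + (Fintype.card (ι × Bool) + 2) ^ l.length * val m := by
  simp [val, Nat.ofDigits_append]

theorem val_inj {l m : List (ι × Bool)} (h : l.length = m.length) (hv : val l = val m) : l = m := by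
  have hd : ∀ l : List (ι × Bool), ∀ x ∈ l.map dig, x < Fintype.card (ι × Bool) + 2 := by
    intro l x hx
    obtain ⟨s, _, rfl⟩ := List.mem_map.1 hx
    have := (Fintype.equivFin (ι × Bool) s).2
    unfold dig; omega
  have := Nat.ofDigits_inj_of_len_eq (b := Fintype.card (ι × Bool) + 2) (by omega)
    (by simpa using h) (hd l) (hd m) hv
  refine List.map_injective_iff.2 ?_ this
  intro a b hab
  exact (Fintype.equivFin _).injective (Fin.ext hab)

def HH (w : FreeGroup ι) : ℕ := val (w.toWord.take ((w.norm + 1) / 2))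
def Psi (w : FreeGroup ι) : ℕ := HH w + HH w⁻¹

theorem Psi_inv (w : FreeGroup ι) : Psi w⁻¹ = Psi w := by simp [Psi, add_comm]

theorem toWord_of_norm {L : List (ι × Bool)} (h : (FreeGroup.mk L).norm = L.length) :
    (FreeGroup.mk L).toWord = L := by
  rw [FreeGroup.norm, FreeGroup.toWord_mk] at h
  rw [FreeGroup.toWord_mk]
  exact (FreeGroup.reduce.red (L := L)).sublist.eq_of_length h

theorem HH_app {w : FreeGroup ι} {A y : List (ι × Bool)} (h : w.toWord = A ++ y)
    (hA : A.length ≤ y.length) : HH w = val A + (Fintype.card (ι × Bool) + 2) ^ A.length *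
      val (y.take ((A.length + y.length + 1) / 2 - A.length)) := by
  have hn : w.norm = A.length + y.length := by simp [FreeGroup.norm, h]
  rw [HH, hn, h, List.take_append, List.take_of_length_le (by omega), val_append]

theorem HH_app_inv {w : FreeGroup ι} {A y : List (ι × Bool)} (h : w.toWord = A ++ y)
    (hA : A.length ≤ y.length) : HH w⁻¹ =
      val ((FreeGroup.invRev y).take ((A.length + y.length + 1) / 2)) := by
  have hn : w.norm = A.length + y.length := by simp [FreeGroup.norm, h]
  rw [HH, FreeGroup.norm_inv_eq, hn, FreeGroup.toWord_inv, h]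
  rw [show FreeGroup.invRev (A ++ y) = FreeGroup.invRev y ++ FreeGroup.invRev A by
    simp [FreeGroup.invRev]]
  rw [List.take_append_of_le_length (by simp; omega)]

theorem swap {g w : FreeGroup ι} {q : ℕ} (hg : g.norm = 2 * q) (hc : cc g⁻¹ w = q)
    (hw : 2 * q ≤ w.norm) (hP : Psi w ≤ Psi (g * w)) :
    val (g⁻¹.toWord.take q) ≤ val (g.toWord.take q) := by
  obtain ⟨-, -, h3⟩ := le_cc.1 hc.ge
  set A := g.toWord.take q with hA
  set b := g⁻¹.toWord.take q with hb
  set y := w.toWord.drop q with hy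
  have hwn : w.norm = w.toWord.length := rfl
  have hgn : g.norm = g.toWord.length := rfl
  have hw1 : w.toWord = b ++ y := by rw [h3, hy, List.take_append_drop]
  have hlA : A.length = q := by simp [hA]; omega
  have hlb : b.length = q := by simp [hb]; omega
  have hly : y.length + q = w.norm := by simp [hy]; omega
  have hg1 : g = FreeGroup.mk A * (FreeGroup.mk b)⁻¹ := by
    have e : g⁻¹.toWord.take q = FreeGroup.invRev (g.toWord.drop q) := by
      rw [FreeGroup.toWord_inv, FreeGroup.invRev, FreeGroup.invRev, ← List.map_reverse,
        ← List.map_reverse, ← List.map_take, List.take_reverse]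
      congr 3
      omega
    rw [hb, e, ← FreeGroup.inv_mk, inv_inv, FreeGroup.mul_mk, hA, List.take_append_drop,
      FreeGroup.mk_toWord]
  have hw2 : w = FreeGroup.mk b * FreeGroup.mk y := by
    rw [FreeGroup.mul_mk, ← hw1, FreeGroup.mk_toWord]
  have hgw : g * w = FreeGroup.mk (A ++ y) := by
    rw [← FreeGroup.mul_mk]; nth_rewrite 1 [hg1]; rw [hw2]; group
  have hsp := cc_spec g⁻¹ w
  rw [hc, inv_inv, FreeGroup.norm_inv_eq] at hsp
  have hgw2 : (g * w).toWord = A ++ y := by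
    rw [hgw]; apply toWord_of_norm; rw [← hgw, List.length_append]; omega
  rw [Psi, Psi, HH_app hw1 (by omega), HH_app_inv hw1 (by omega), HH_app hgw2 (by omega),
    HH_app_inv hgw2 (by omega), hlA, hlb] at hP
  omega

theorem sum_move (Ψ : FreeGroup ι → ℕ) (hΨ : ∀ x, Ψ x⁻¹ = Ψ x) (α e : MulAut (FreeGroup ι))
    (s t : ι × Bool) (h1 : e (FreeGroup.mk [s]) = FreeGroup.mk [s] * FreeGroup.mk [t])
    (h2 : ∀ k, k ≠ s.1 → e (of k) = of k) :
    (∑ i, Ψ ((α * e) (of i))) + Ψ (α (FreeGroup.mk [s])) =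
      (∑ i, Ψ (α (of i))) + Ψ (α (FreeGroup.mk [s]) * α (FreeGroup.mk [t])) := by
  have hs : ∀ β : MulAut (FreeGroup ι), Ψ (β (FreeGroup.mk [s])) = Ψ (β (of s.1)) := by
    intro β
    rcases s with ⟨i, _ | _⟩
    · rw [mk_false, map_inv, hΨ]
    · rfl
  rw [← Finset.add_sum_erase Finset.univ _ (Finset.mem_univ s.1),
    ← Finset.add_sum_erase Finset.univ (fun i => Ψ (α (of i))) (Finset.mem_univ s.1)]
  have e1 : ∑ x ∈ Finset.univ.erase s.1, Ψ ((α * e) (of x)) =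
      ∑ x ∈ Finset.univ.erase s.1, Ψ (α (of x)) := by
    apply Finset.sum_congr rfl
    intro x hx
    rw [MulAut.mul_apply, h2 x (Finset.ne_of_mem_erase hx)]
  rw [e1, ← hs, ← hs, MulAut.mul_apply, h1, map_mul]
  omega

theorem nielsen_reduce (α : MulAut (FreeGroup ι)) : ∃ e ∈ E ι, ∀ i, ((α * e) (of i)).norm ≤ 1 := by
  let μ : MulAut (FreeGroup ι) → ℕ ×ₗ ℕ := fun β =>
    toLex (∑ i, (β (of i)).norm, ∑ i, Psi (β (of i)))
  obtain ⟨β, ⟨e, he, rfl⟩, hmin⟩ := (InvImage.wf μ wellFounded_lt).has_min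
    {β | ∃ e ∈ E ι, β = α * e} ⟨α, 1, one_mem _, by simp⟩
  refine ⟨e, he, ?_⟩
  set β := α * e with hβ
  have hmin' : ∀ e' ∈ E ι, ¬ μ (β * e') < μ β := by
    intro e' he'
    exact hmin _ ⟨e * e', mul_mem he he', by rw [hβ, mul_assoc]⟩
  have hA : ∀ s t : ι × Bool, t.1 ≠ s.1 →
      (β (FreeGroup.mk [s])).norm ≤ (β (FreeGroup.mk [s]) * β (FreeGroup.mk [t])).norm ∧
      ((β (FreeGroup.mk [s])).norm = (β (FreeGroup.mk [s]) * β (FreeGroup.mk [t])).norm →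
        Psi (β (FreeGroup.mk [s])) ≤ Psi (β (FreeGroup.mk [s]) * β (FreeGroup.mk [t]))) := by
    intro s t hst
    obtain ⟨e', he', h1, h2⟩ := move s t hst
    have m := hmin' e' he'
    have s1 := sum_move FreeGroup.norm (fun x => FreeGroup.norm_inv_eq) β e' s t h1 h2
    have s2 := sum_move Psi Psi_inv β e' s t h1 h2
    simp only [μ, Prod.Lex.toLex_lt_toLex, not_or, not_and] at m
    constructor
    · omega
    · intro h
      have := m.2 (by omega)
      omega
  have hne : ∀ s, β (FreeGroup.mk [s]) ≠ 1 := by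
    intro s h
    rw [map_eq_one_iff β β.injective] at h
    have := congrArg FreeGroup.norm h
    simp [FreeGroup.norm, FreeGroup.toWord_mk] at this
  have hself : ∀ s, 2 * cc (β (FreeGroup.mk [s]))⁻¹ (β (FreeGroup.mk [s])) <
      (β (FreeGroup.mk [s])).norm := by
    intro s; rw [cc_comm]; exact cc_inv_self (hne s)
  have hidx : ∀ s t : ι × Bool, t ≠ bar s → t = s ∨ t.1 ≠ s.1 := by
    intro s t h
    by_cases h1 : t.1 = s.1
    · left
      rcases s with ⟨i, _ | _⟩ <;> rcases t with ⟨j, _ | _⟩ <;> simp_all [bar]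
    · exact Or.inr h1
  have N1 : ∀ s t, t ≠ bar s → 2 * cc (β (FreeGroup.mk [s]))⁻¹ (β (FreeGroup.mk [t])) ≤
      (β (FreeGroup.mk [t])).norm := by
    intro s t h
    rcases hidx s t h with rfl | h1
    · exact (hself t).le
    · have := (hA s t h1).1
      have e := cc_spec (β (FreeGroup.mk [s]))⁻¹ (β (FreeGroup.mk [t]))
      rw [inv_inv, FreeGroup.norm_inv_eq] at e
      omega
  have N1' : ∀ s t, t ≠ bar s → 2 * cc (β (FreeGroup.mk [s]))⁻¹ (β (FreeGroup.mk [t])) ≤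
      (β (FreeGroup.mk [s])).norm := by
    intro s t h
    have := N1 (bar t) (bar s) (by rintro h'; apply h; simpa using h'.symm)
    rw [mk_bar, mk_bar, map_inv, map_inv, inv_inv, FreeGroup.norm_inv_eq, cc_comm] at this
    exact this
  have N2 : ∀ r s t, s ≠ bar r → t ≠ bar s →
      cc (β (FreeGroup.mk [r]))⁻¹ (β (FreeGroup.mk [s])) +
      cc (β (FreeGroup.mk [s]))⁻¹ (β (FreeGroup.mk [t])) < (β (FreeGroup.mk [s])).norm := by
    intro r s t hrs hst
    by_contra hcon
    have a1 := N1 r s hrs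
    have a2 := N1' r s hrs
    have a3 := N1 s t hst
    have a4 := N1' s t hst
    have i1 : s.1 ≠ r.1 := by
      rcases hidx r s hrs with rfl | h
      · have := hself s; omega
      · exact h
    have i2 : t.1 ≠ s.1 := by
      rcases hidx s t hst with rfl | h
      · have := hself t; omega
      · exact h
    set q := cc (β (FreeGroup.mk [s]))⁻¹ (β (FreeGroup.mk [t])) with hq
    have hq' : cc (β (FreeGroup.mk [r]))⁻¹ (β (FreeGroup.mk [s])) = q := by omega
    have e1 := cc_spec (β (FreeGroup.mk [r]))⁻¹ (β (FreeGroup.mk [s]))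
    have e2 := cc_spec (β (FreeGroup.mk [s]))⁻¹ (β (FreeGroup.mk [t]))
    rw [inv_inv, FreeGroup.norm_inv_eq] at e1 e2
    have p1 := (hA r s i1).2 (by omega)
    have p2 := (hA (bar t) (bar s) (by simpa [bar] using i2.symm)).2 (by
      rw [mk_bar, mk_bar, map_inv, map_inv, ← mul_inv_rev, FreeGroup.norm_inv_eq,
        FreeGroup.norm_inv_eq]; omega)
    rw [mk_bar, mk_bar, map_inv, map_inv, ← mul_inv_rev, Psi_inv, Psi_inv] at p2
    rw [← Psi_inv, ← Psi_inv (_ * _), mul_inv_rev] at p1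
    have v1 := swap (q := q) (by omega) hq.symm (by omega) p2
    have v2 := swap (q := q) (by rw [FreeGroup.norm_inv_eq]; omega)
      (by rw [inv_inv, cc_comm]; exact hq') (by rw [FreeGroup.norm_inv_eq]; omega) p1
    rw [inv_inv] at v2
    have hn : (β (FreeGroup.mk [s])).norm = (β (FreeGroup.mk [s])).toWord.length := rfl
    have := val_inj (by simp) (le_antisymm v2 v1)
    have hl := le_cc.2 ⟨by omega, by rw [FreeGroup.norm_inv_eq]; omega, this⟩
    have := cc_inv_self (hne s)
    omega
  exact nielsen_basis β N1 N2

theorem finite_len_one : {α : MulAut (FreeGroup ι) | ∀ i, (α (of i)).norm ≤ 1}.Finite := by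
  have hfin : {l : List (ι × Bool) | l.length ≤ 1}.Finite := List.finite_length_le _ _
  have h2 : {x : FreeGroup ι | x.norm ≤ 1}.Finite :=
    Set.Finite.of_injOn (f := FreeGroup.toWord) (fun x hx => hx)
      FreeGroup.toWord_injective.injOn hfin
  have h3 : (Set.pi Set.univ (fun _ : ι => {x : FreeGroup ι | x.norm ≤ 1})).Finite :=
    Set.Finite.pi fun _ => h2
  refine Set.Finite.of_injOn (f := fun α i => α (of i)) (fun x hx => ?_) ?_ h3
  · intro i _; exact hx i
  · intro a _ b _ hab
    exact autExt fun j => congrFun hab j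

theorem E_finiteIndex : (E ι).FiniteIndex := by
  have hfin := finite_len_one (ι := ι)
  have : Finite (MulAut (FreeGroup ι) ⧸ E ι) := by
    have := hfin.to_subtype
    refine Finite.of_surjective (fun x : {α : MulAut (FreeGroup ι) | ∀ i, (α (of i)).norm ≤ 1} =>
      (QuotientGroup.mk x.1 : MulAut (FreeGroup ι) ⧸ E ι)) ?_
    intro q
    obtain ⟨a, rfl⟩ := QuotientGroup.mk_surjective q
    obtain ⟨e, he, h⟩ := nielsen_reduce a
    refine ⟨⟨a * e, h⟩, ?_⟩
    exact (QuotientGroup.eq.2 (by simpa using he)).symm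
  exact Subgroup.finiteIndex_of_finite_quotient

theorem G_fg : Group.FG (MulAut (FreeGroup ι)) := by
  have hS : {g : MulAut (FreeGroup ι) | ∃ (i j : ι) (h : j ≠ i), g = R h ∨ g = Lt h}.Finite := by
    have : {g : MulAut (FreeGroup ι) | ∃ (i j : ι) (h : j ≠ i), g = R h ∨ g = Lt h} =
      (Set.range fun p : {p : ι × ι // p.2 ≠ p.1} => R p.2) ∪
      (Set.range fun p : {p : ι × ι // p.2 ≠ p.1} => Lt p.2) := by
      ext g
      constructor
      · rintro ⟨i, j, h, rfl | rfl⟩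
        · exact Or.inl ⟨⟨(i, j), h⟩, rfl⟩
        · exact Or.inr ⟨⟨(i, j), h⟩, rfl⟩
      · rintro (⟨⟨⟨i, j⟩, h⟩, rfl⟩ | ⟨⟨⟨i, j⟩, h⟩, rfl⟩)
        · exact ⟨i, j, h, Or.inl rfl⟩
        · exact ⟨i, j, h, Or.inr rfl⟩
    rw [this]
    exact (Set.finite_range _).union (Set.finite_range _)
  rw [Group.fg_iff]
  refine ⟨_, ?_, hS.union (finite_len_one (ι := ι))⟩
  rw [eq_top_iff]
  intro a _
  obtain ⟨e, he, h⟩ := nielsen_reduce a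
  have h1 : a * e ∈ Subgroup.closure ({g : MulAut (FreeGroup ι) | ∃ (i j : ι) (h : j ≠ i),
      g = R h ∨ g = Lt h} ∪ {α : MulAut (FreeGroup ι) | ∀ i, (α (of i)).norm ≤ 1}) :=
    Subgroup.subset_closure (Or.inr h)
  have h2 := Subgroup.closure_mono (Set.subset_union_left (t := {α : MulAut (FreeGroup ι) |
    ∀ i, (α (of i)).norm ≤ 1})) he
  simpa using mul_mem h1 (inv_mem h2)

end P1b

end FA

namespace FA

set_option linter.unusedSectionVars false

section P2
open Pointwise commutatorElement
variable {P : Type*} [Group P]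

theorem closure_le_norm {S T : Set P} (h : ∀ s ∈ S, ∀ t ∈ T, s * t * s⁻¹ ∈ Subgroup.closure T ∧
    s⁻¹ * t * s ∈ Subgroup.closure T) :
    Subgroup.closure S ≤ Subgroup.normalizer (Subgroup.closure T : Subgroup P) := by
  rw [Subgroup.closure_le]
  intro s hs
  have h1 : ∀ x ∈ Subgroup.closure T, s * x * s⁻¹ ∈ Subgroup.closure T := by
    intro x hx
    have : Subgroup.closure T ≤ (Subgroup.closure T).comap (MulAut.conj s).toMonoidHom := by
      rw [Subgroup.closure_le]; intro t ht; exact (h s hs t ht).1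
    exact this hx
  have h2 : ∀ x ∈ Subgroup.closure T, s⁻¹ * x * s ∈ Subgroup.closure T := by
    intro x hx
    have : Subgroup.closure T ≤ (Subgroup.closure T).comap (MulAut.conj s⁻¹).toMonoidHom := by
      rw [Subgroup.closure_le]; intro t ht; simpa using (h s hs t ht).2
    simpa using this hx
  rw [SetLike.mem_coe, Subgroup.mem_normalizer_iff]
  intro x
  refine ⟨h1 x, fun hx => ?_⟩
  have := h2 _ hx
  simpa [mul_assoc] using this

theorem tav (A A' V W H : Subgroup P) [Finite H] (hH : A ⊔ A' = H)
    (hAV : A ≤ Subgroup.normalizer (V : Set P)) (hAV' : A' ≤ Subgroup.normalizer (V : Set P))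
    (hAW : A ≤ Subgroup.normalizer (W : Set P)) (hAW' : A' ≤ Subgroup.normalizer (W : Set P)) :
    ∃ K0 : ℕ, ∀ k, K0 ≤ k → ∀ h ∈ H, ∀ x ∈ (((A ⊔ V : Subgroup P) : Set P) *
      ((A' ⊔ W : Subgroup P) : Set P)) ^ k, h * x ∈ (((A ⊔ V : Subgroup P) : Set P) *
      ((A' ⊔ W : Subgroup P) : Set P)) ^ k := by
  have comm : ∀ X Y : Subgroup P, X ≤ Subgroup.normalizer (Y : Set P) →
      Commute (X : Set P) (Y : Set P) := by
    intro X Y h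
    rw [Commute, SemiconjBy, ← Subgroup.coe_mul_of_left_le_normalizer_right X Y h,
      ← Subgroup.coe_mul_of_right_le_normalizer_left Y X h, sup_comm]
  set S : Set P := (A : Set P) * (A' : Set P) with hS
  set T : Set P := (V : Set P) * (W : Set P) with hT
  have hST : Commute S T :=
    ((comm A V hAV).mul_left (comm A' V hAV')).mul_right ((comm A W hAW).mul_left (comm A' W hAW'))
  have e1 : ((A ⊔ V : Subgroup P) : Set P) * ((A' ⊔ W : Subgroup P) : Set P) = S * T := by
    rw [Subgroup.coe_mul_of_left_le_normalizer_right A V hAV,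
      Subgroup.coe_mul_of_left_le_normalizer_right A' W hAW', hS, hT]
    rw [mul_assoc, ← mul_assoc (V : Set P), ← (comm A' V hAV').eq]
    simp only [mul_assoc]
  have h1S : (1 : P) ∈ S := ⟨1, A.one_mem, 1, A'.one_mem, by simp⟩
  have mono : ∀ {k l : ℕ}, k ≤ l → S ^ k ⊆ S ^ l := fun h => Set.pow_subset_pow_right h1S h
  have hSH : ∀ k, S ^ k ⊆ H := by
    intro k
    induction k with
    | zero => simp
    | succ k ih =>
      rw [pow_succ]
      rintro _ ⟨x, hx, _, ⟨a, ha, b, hb, rfl⟩, rfl⟩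
      refine H.mul_mem (ih hx) (H.mul_mem ?_ ?_)
      · rw [← hH]; exact Subgroup.mem_sup_left ha
      · rw [← hH]; exact Subgroup.mem_sup_right hb
  have hex : ∀ h ∈ H, ∃ k, h ∈ S ^ k ∧ h⁻¹ ∈ S ^ k := by
    intro h hh
    rw [← hH, Subgroup.sup_eq_closure] at hh
    induction hh using Subgroup.closure_induction with
    | mem x hx =>
      refine ⟨1, ?_⟩
      rw [pow_one]
      rcases hx with hx | hx
      · exact ⟨⟨x, hx, 1, A'.one_mem, by simp⟩, ⟨x⁻¹, A.inv_mem hx, 1, A'.one_mem, by simp⟩⟩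
      · exact ⟨⟨1, A.one_mem, x, hx, by simp⟩, ⟨1, A.one_mem, x⁻¹, A'.inv_mem hx, by simp⟩⟩
    | one => exact ⟨0, by simp⟩
    | mul x y _ _ hx hy =>
      obtain ⟨k, hk, hk'⟩ := hx
      obtain ⟨l, hl, hl'⟩ := hy
      refine ⟨k + l, ?_, ?_⟩
      · rw [pow_add]; exact ⟨x, hk, y, hl, rfl⟩
      · rw [add_comm, pow_add]; exact ⟨y⁻¹, hl', x⁻¹, hk', by simp⟩
    | inv x _ hx =>
      obtain ⟨k, hk, hk'⟩ := hx
      exact ⟨k, hk', by simpa using hk⟩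
  choose! kf hkf using hex
  have := Fintype.ofFinite H
  refine ⟨Finset.univ.sup fun h : H => kf h, fun k hk h hh x hx => ?_⟩
  have hSk : S ^ k = H := by
    apply le_antisymm (hSH k)
    intro y hy
    refine mono (le_trans ?_ hk) (hkf y hy).1
    exact Finset.le_sup (f := fun h : H => kf h) (Finset.mem_univ ⟨y, hy⟩)
  rw [e1, hST.mul_pow, hSk] at hx ⊢
  obtain ⟨y, hy, z, hz, rfl⟩ := hx
  exact ⟨h * y, H.mul_mem hh hy, z, hz, by simp [mul_assoc]⟩

variable {ι : Type*} [LinearOrder ι] [Fintype ι]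

structure Stein (e : ι → ι → P) (M : ℕ) : Prop where
  gen : Subgroup.closure {g | ∃ i j, i ≠ j ∧ g = e i j} = ⊤
  pos : 0 < M
  tors : ∀ i j, i ≠ j → e i j ^ M = 1
  comm : ∀ i j k l, i ≠ j → k ≠ l → j ≠ k → i ≠ l → Commute (e i j) (e k l)
  rel : ∀ i j k, i ≠ j → j ≠ k → i ≠ k → e j k * e i j * (e j k)⁻¹ = e i j * e i k

/-- subgroup generated by a family indexed by a relation -/
def sg (e : ι → ι → P) (r : ι → ι → Prop) : Subgroup P :=
  Subgroup.closure {g | ∃ i j, i ≠ j ∧ r i j ∧ g = e i j}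

theorem sg_mem {e : ι → ι → P} {r : ι → ι → Prop} {i j : ι} (h : i ≠ j) (hr : r i j) :
    e i j ∈ sg e r := Subgroup.subset_closure ⟨i, j, h, hr, rfl⟩

theorem sg_le {e : ι → ι → P} {r : ι → ι → Prop} {H : Subgroup P}
    (h : ∀ i j, i ≠ j → r i j → e i j ∈ H) : sg e r ≤ H := by
  rw [sg, Subgroup.closure_le]
  rintro _ ⟨i, j, h1, h2, rfl⟩
  exact h i j h1 h2

theorem sg_mono {e : ι → ι → P} {r s : ι → ι → Prop} (h : ∀ i j, r i j → s i j) :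
    sg e r ≤ sg e s := sg_le fun i j h1 h2 => sg_mem h1 (h i j h2)

namespace Stein
variable {e : ι → ι → P} {M : ℕ} (h : Stein e M)
include h

theorem norm_col (l : ι) (r : ι → ι → Prop) (hr : ∀ i j, r i j → i ≠ l ∧ j ≠ l) :
    sg e r ≤ Subgroup.normalizer (sg e (fun _ j => j = l) : Subgroup P) := by
  apply closure_le_norm
  rintro _ ⟨i, j, hij, hrij, rfl⟩ _ ⟨k, l', hkl, rfl, rfl⟩
  obtain ⟨h1, h2⟩ := hr i j hrij
  change _ ∈ sg e _ ∧ _ ∈ sg e _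
  by_cases hjk : j = k
  · subst hjk
    have e1 := h.rel i j l' hij hkl h1
    have e2 := h.comm i j i l' hij h1 hij.symm h1
    have m1 : e i l' ∈ sg e (fun _ j => j = l') := sg_mem h1 rfl
    have m2 : e j l' ∈ sg e (fun _ j => j = l') := sg_mem hkl rfl
    have e3 : (e i j)⁻¹ * e j l' * e i j = e i l' * e j l' := by
      rw [mul_inv_eq_iff_eq_mul] at e1; rw [mul_assoc, e1]; group
    have e4 : e i j * e j l' * (e i j)⁻¹ = (e i l')⁻¹ * e j l' := by
      have e5 := e2.inv_right.eq
      rw [mul_inv_eq_iff_eq_mul, mul_assoc, mul_inv_eq_iff_eq_mul.1 e1, ← mul_assoc, ← mul_assoc,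
         ← e5]
      group
    rw [e3, e4]
    exact ⟨mul_mem (inv_mem m1) m2, mul_mem m1 m2⟩
  · have c := h.comm i j k l' hij hkl hjk h1
    have m2 : e k l' ∈ sg e (fun _ j => j = l') := sg_mem hkl rfl
    have c1 : e i j * e k l' * (e i j)⁻¹ = e k l' := by rw [c.eq]; simp
    have c2 : (e i j)⁻¹ * e k l' * (e i j) = e k l' := by rw [mul_assoc, ← c.eq]; simp
    rw [c1, c2]; exact ⟨m2, m2⟩

theorem norm_row (l : ι) (r : ι → ι → Prop) (hr : ∀ i j, r i j → i ≠ l ∧ j ≠ l) :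
    sg e r ≤ Subgroup.normalizer (sg e (fun i _ => i = l) : Subgroup P) := by
  apply closure_le_norm
  rintro _ ⟨i, j, hij, hrij, rfl⟩ _ ⟨l', k, hkl, rfl, rfl⟩
  obtain ⟨h1, h2⟩ := hr i j hrij
  change _ ∈ sg e _ ∧ _ ∈ sg e _
  by_cases hjk : i = k
  · subst hjk
    have e1 := h.rel l' i j hkl hij h2.symm
    have e2 := h.comm i j l' j hij h2.symm h2 hij
    have m1 : e l' j ∈ sg e (fun i _ => i = l') := sg_mem h2.symm rfl
    have m2 : e l' i ∈ sg e (fun i _ => i = l') := sg_mem hkl rfl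
    have e4 : (e i j)⁻¹ * e l' i * (e i j) = e l' i * (e l' j)⁻¹ := by
      have e5 := e2.inv_right.eq
      rw [mul_assoc, inv_mul_eq_iff_eq_mul, ← mul_assoc, mul_inv_eq_iff_eq_mul.1 e1,
        mul_assoc (_ * _), e5]
      group
    rw [e1, e4]
    exact ⟨mul_mem m2 m1, mul_mem m2 (inv_mem m1)⟩
  · have c := h.comm l' k i j hkl hij (Ne.symm hjk) h2.symm
    have m2 : e l' k ∈ sg e (fun i _ => i = l') := sg_mem hkl rfl
    have c1 : e i j * e l' k * (e i j)⁻¹ = e l' k := by rw [← c.eq]; simp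
    have c2 : (e i j)⁻¹ * e l' k * (e i j) = e l' k := by rw [mul_assoc, c.eq]; simp
    rw [c1, c2]; exact ⟨m2, m2⟩

theorem finite_ab (r : ι → ι → Prop) (hr : ∀ i j k l, r i j → r k l → i ≠ j → k ≠ l →
    Commute (e i j) (e k l)) : Finite (sg e r) := by
  have hS : {g | ∃ i j, i ≠ j ∧ r i j ∧ g = e i j}.Finite :=
    (Set.finite_range fun p : ι × ι => e p.1 p.2).subset (by
      rintro _ ⟨i, j, _, _, rfl⟩; exact ⟨(i, j), rfl⟩)
  have : IsMulCommutative (sg e r) := by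
    apply Subgroup.isMulCommutative_closure
    rintro _ ⟨i, j, hij, hr1, rfl⟩ _ ⟨k, l, hkl, hr2, rfl⟩
    exact (hr i j k l hr1 hr2 hij hkl).eq
  let _ : CommGroup (sg e r) := { (inferInstance : Group (sg e r)) with mul_comm := mul_comm' }
  have hfg : Group.FG (sg e r) := by
    rw [Group.fg_iff_subgroup_fg, Subgroup.fg_iff]
    exact ⟨_, rfl, hS⟩
  apply CommGroup.finite_of_fg_isMulTorsion
  have hpow : ∀ x ∈ sg e r, x ^ M = 1 := by
    intro x hx
    rw [sg] at hx
    have hc : ∀ a b, a ∈ sg e r → b ∈ sg e r → Commute a b := by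
      intro a b ha hb
      exact congrArg Subtype.val (mul_comm (⟨a, ha⟩ : sg e r) ⟨b, hb⟩)
    induction hx using Subgroup.closure_induction with
    | mem x hx => obtain ⟨i, j, hij, _, rfl⟩ := hx; exact h.tors i j hij
    | one => simp
    | mul x y hx hy h1 h2 => rw [(hc x y hx hy).mul_pow, h1, h2, one_mul]
    | inv x _ h1 => rw [inv_pow, h1, inv_one]
  intro x
  rw [isOfFinOrder_iff_pow_eq_one]
  exact ⟨M, h.pos, Subtype.ext (hpow x.1 x.2)⟩

theorem finite_col (l : ι) : Finite (sg e (fun _ j => j = l)) := by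
  apply h.finite_ab
  rintro i j k l' rfl rfl hij hkl
  exact h.comm i _ k _ hij hkl hkl.symm hij

theorem finite_row (l : ι) : Finite (sg e (fun i _ => i = l)) := by
  apply h.finite_ab
  rintro i j k l' rfl rfl hij hkl
  exact h.comm _ j _ l' hij hkl hij.symm hkl

theorem relIndex_cent {H V : Subgroup P} [Finite V] (hn : H ≤ Subgroup.normalizer (V : Set P)) :
    (Subgroup.centralizer (V : Set P)).relIndex H ≠ 0 := by
  have h1 : (Subgroup.centralizer (V : Set P)).relIndex (Subgroup.normalizer (V : Set P)) ≠ 0 := by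
    rw [Subgroup.relIndex, ← Subgroup.normalizerMonoidHom_ker]
    have : Finite (MulAut V) := Finite.of_injective (fun f : MulAut V => (f : V → V))
      DFunLike.coe_injective
    exact Subgroup.index_ker (V.normalizerMonoidHom) ▸ Nat.card_pos.ne'
  intro h0
  exact h1 (Subgroup.relIndex_eq_zero_of_le_right hn h0)

theorem center_relIndex (l : ι) :
    (Subgroup.center P).relIndex (sg e (fun i j => i ≠ l ∧ j ≠ l)) ≠ 0 := by
  have := h.finite_col l
  have := h.finite_row l
  have h1 := h.relIndex_cent (h.norm_col l (fun i j => i ≠ l ∧ j ≠ l) (fun _ _ h => h))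
  have h2 := h.relIndex_cent (h.norm_row l (fun i j => i ≠ l ∧ j ≠ l) (fun _ _ h => h))
  have h3 := Subgroup.relIndex_inf_ne_zero h1 h2
  intro h0
  apply h3
  refine Subgroup.relIndex_eq_zero_of_le_left ?_ h0
  rintro x ⟨hx1, hx2⟩
  rw [Subgroup.mem_center_iff]
  intro g
  have hg : g ∈ sg e (fun _ j => j = l) ⊔ sg e (fun i _ => i = l) := by
    have : (⊤ : Subgroup P) ≤ sg e (fun _ j => j = l) ⊔ sg e (fun i _ => i = l) := by
      rw [← h.gen, Subgroup.closure_le]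
      rintro _ ⟨i, j, hij, rfl⟩
      by_cases hj : j = l
      · exact Subgroup.mem_sup_left (sg_mem hij hj)
      by_cases hi : i = l
      · exact Subgroup.mem_sup_right (sg_mem hij hi)
      have e1 := h.rel i l j hi (Ne.symm hj) hij
      have m1 : e i l ∈ sg e (fun _ j => j = l) ⊔ sg e (fun i _ => i = l) :=
        Subgroup.mem_sup_left (sg_mem hi rfl)
      have m2 : e l j ∈ sg e (fun _ j => j = l) ⊔ sg e (fun i _ => i = l) :=
        Subgroup.mem_sup_right (sg_mem (Ne.symm hj) rfl)
      rw [← inv_mul_eq_iff_eq_mul] at e1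
      rw [← e1]
      exact mul_mem (inv_mem m1) (mul_mem (mul_mem m2 m1) (inv_mem m2))
    exact this trivial
  have hle : sg e (fun _ j => j = l) ⊔ sg e (fun i _ => i = l) ≤ Subgroup.centralizer {x} := by
    refine sup_le ?_ ?_
    · intro y hy
      rw [Subgroup.mem_centralizer_singleton_iff]
      exact (Subgroup.mem_centralizer_iff.1 hx1 y hy)
    · intro y hy
      rw [Subgroup.mem_centralizer_singleton_iff]
      exact (Subgroup.mem_centralizer_iff.1 hx2 y hy)
  exact Subgroup.mem_centralizer_singleton_iff.1 (hle hg)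

theorem map {Q : Type*} [Group Q] (f : P →* Q) (hf : Function.Surjective f) :
    Stein (fun i j => f (e i j)) M where
  gen := by
    have : {g | ∃ i j, i ≠ j ∧ g = f (e i j)} = f '' {g | ∃ i j, i ≠ j ∧ g = e i j} := by
      ext x; constructor
      · rintro ⟨i, j, h, rfl⟩; exact ⟨_, ⟨i, j, h, rfl⟩, rfl⟩
      · rintro ⟨_, ⟨i, j, h, rfl⟩, rfl⟩; exact ⟨i, j, h, rfl⟩
    rw [this, ← MonoidHom.map_closure, h.gen, Subgroup.map_top_of_surjective f hf]
  pos := h.pos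
  tors i j hij := by rw [← map_pow, h.tors i j hij, map_one]
  comm i j k l h1 h2 h3 h4 := (h.comm i j k l h1 h2 h3 h4).map f
  rel i j k h1 h2 h3 := by rw [← map_mul, ← map_inv, ← map_mul, h.rel i j k h1 h2 h3, map_mul]

theorem tavgen (a z b : ι) (ha : ∀ i, a ≤ i) (hz : ∀ i, i ≤ z) (hab : a ≠ b) (hbz : b ≠ z)
    (haz : a ≠ z)
    (fa : Finite (sg e (fun i j => i ≠ a ∧ j ≠ a))) (fz : Finite (sg e (fun i j => i ≠ z ∧ j ≠ z))) :
    Finite P := by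
  have split : ∀ (r s : ι → ι → Prop), sg e (fun i j => r i j ∨ s i j) = sg e r ⊔ sg e s := by
    intro r s
    apply le_antisymm
    · apply sg_le
      rintro i j h1 (h2 | h2)
      · exact Subgroup.mem_sup_left (sg_mem h1 h2)
      · exact Subgroup.mem_sup_right (sg_mem h1 h2)
    · exact sup_le (sg_mono fun i j h => Or.inl h) (sg_mono fun i j h => Or.inr h)
  have sgcongr : ∀ (r s : ι → ι → Prop), (∀ i j, i ≠ j → (r i j ↔ s i j)) → sg e r = sg e s := by
    intro r s hrs
    exact le_antisymm (sg_le fun i j h1 h2 => sg_mem h1 ((hrs i j h1).1 h2))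
      (sg_le fun i j h1 h2 => sg_mem h1 ((hrs i j h1).2 h2))
  set U := sg e (fun i j => i < j) with hU
  set D := sg e (fun i j => j < i) with hD
  -- decomposition for z
  have Uz : sg e (fun i j => i < j ∧ i ≠ z ∧ j ≠ z) ⊔ sg e (fun _ j => j = z) = U := by
    rw [← split]; apply sgcongr
    intro i j hij
    constructor
    · rintro (h | rfl)
      · exact h.1
      · exact lt_of_le_of_ne (hz i) hij
    · intro h
      by_cases hj : j = z
      · exact Or.inr hj
      · exact Or.inl ⟨h, (lt_of_lt_of_le h (hz j)).ne, hj⟩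
  have Dz : sg e (fun i j => j < i ∧ i ≠ z ∧ j ≠ z) ⊔ sg e (fun i _ => i = z) = D := by
    rw [← split]; apply sgcongr
    intro i j hij
    constructor
    · rintro (h | rfl)
      · exact h.1
      · exact lt_of_le_of_ne (hz j) hij.symm
    · intro h
      by_cases hj : i = z
      · exact Or.inr hj
      · exact Or.inl ⟨h, hj, (lt_of_lt_of_le h (hz i)).ne⟩
  have Ua : sg e (fun i j => i < j ∧ i ≠ a ∧ j ≠ a) ⊔ sg e (fun i _ => i = a) = U := by
    rw [← split]; apply sgcongr
    intro i j hij
    constructor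
    · rintro (h | rfl)
      · exact h.1
      · exact lt_of_le_of_ne (ha j) hij
    · intro h
      by_cases hj : i = a
      · exact Or.inr hj
      · exact Or.inl ⟨h, hj, (lt_of_le_of_lt (ha i) h).ne'⟩
  have Da : sg e (fun i j => j < i ∧ i ≠ a ∧ j ≠ a) ⊔ sg e (fun _ j => j = a) = D := by
    rw [← split]; apply sgcongr
    intro i j hij
    constructor
    · rintro (h | rfl)
      · exact h.1
      · exact lt_of_le_of_ne (ha i) hij.symm
    · intro h
      by_cases hj : j = a
      · exact Or.inr hj
      · exact Or.inl ⟨h, (lt_of_le_of_lt (ha j) h).ne', hj⟩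
  have Hl : ∀ l, sg e (fun i j => i < j ∧ i ≠ l ∧ j ≠ l) ⊔ sg e (fun i j => j < i ∧ i ≠ l ∧ j ≠ l) =
      sg e (fun i j => i ≠ l ∧ j ≠ l) := by
    intro l
    rw [← split]; apply sgcongr
    intro i j hij
    rcases lt_or_gt_of_ne hij with h | h <;> tauto
  obtain ⟨K1, h1⟩ := tav _ _ _ _ _ (Hl z)
    (h.norm_col z _ (fun _ _ h => h.2)) (h.norm_col z _ (fun _ _ h => h.2))
    (h.norm_row z _ (fun _ _ h => h.2)) (h.norm_row z _ (fun _ _ h => h.2))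
  obtain ⟨K2, h2⟩ := tav _ _ _ _ _ (Hl a)
    (h.norm_row a _ (fun _ _ h => h.2)) (h.norm_row a _ (fun _ _ h => h.2))
    (h.norm_col a _ (fun _ _ h => h.2)) (h.norm_col a _ (fun _ _ h => h.2))
  rw [Uz, Dz] at h1
  rw [Ua, Da] at h2
  set k := max K1 K2
  set Y : Set P := ((U : Set P) * (D : Set P)) ^ k with hY
  have fin_of_sub : ∀ {X Z : Subgroup P}, X ≤ Z → Finite Z → (X : Set P).Finite := by
    intro X Z hXZ hZ
    exact (Set.toFinite (Z : Set P)).subset hXZ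
  have Ufin : (U : Set P).Finite := by
    rw [← Uz, Subgroup.coe_mul_of_left_le_normalizer_right _ _ (h.norm_col z _ (fun _ _ h => h.2))]
    have := h.finite_col z
    exact Set.Finite.mul (fin_of_sub (sg_mono fun _ _ h => h.2) fz) (Set.toFinite _)
  have Dfin : (D : Set P).Finite := by
    rw [← Dz, Subgroup.coe_mul_of_left_le_normalizer_right _ _ (h.norm_row z _ (fun _ _ h => h.2))]
    have := h.finite_row z
    exact Set.Finite.mul (fin_of_sub (sg_mono fun _ _ h => h.2) fz) (Set.toFinite _)
  have Yfin : Y.Finite := by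
    have : ∀ m : ℕ, (((U : Set P) * (D : Set P)) ^ m).Finite := by
      intro m
      induction m with
      | zero => simp
      | succ m ih => rw [pow_succ]; exact ih.mul (Ufin.mul Dfin)
    exact this k
  have one_mem : (1 : P) ∈ Y := by
    apply Set.one_mem_pow
    exact ⟨1, U.one_mem, 1, D.one_mem, by simp⟩
  have gen : ∀ g : P, g ∈ sg e (fun i j => i ≠ z ∧ j ≠ z) ⊔ sg e (fun i j => i ≠ a ∧ j ≠ a) := by
    set J := sg e (fun i j => i ≠ z ∧ j ≠ z) ⊔ sg e (fun i j => i ≠ a ∧ j ≠ a)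
    have m1 : ∀ i j, i ≠ j → i ≠ z → j ≠ z → e i j ∈ J := fun i j h1 h2 h3 =>
      Subgroup.mem_sup_left (sg_mem h1 ⟨h2, h3⟩)
    have m2 : ∀ i j, i ≠ j → i ≠ a → j ≠ a → e i j ∈ J := fun i j h1 h2 h3 =>
      Subgroup.mem_sup_right (sg_mem h1 ⟨h2, h3⟩)
    have tri : ∀ i j k, i ≠ j → j ≠ k → i ≠ k → e i j ∈ J → e j k ∈ J → e i k ∈ J := by
      intro i j k a1 a2 a3 b1 b2
      have e1 := h.rel i j k a1 a2 a3
      rw [← inv_mul_eq_iff_eq_mul] at e1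
      rw [← e1]
      exact mul_mem (inv_mem b1) (mul_mem (mul_mem b2 b1) (inv_mem b2))
    have : (⊤ : Subgroup P) ≤ J := by
      rw [← h.gen, Subgroup.closure_le]
      rintro _ ⟨i, j, hij, rfl⟩
      by_cases c1 : i = z
      · subst c1
        by_cases c2 : j = a
        · subst c2
          exact tri _ b _ hbz.symm hab.symm hij (m2 _ _ hbz.symm hij hab.symm)
            (m1 _ _ hab.symm hbz haz)
        · exact m2 _ _ hij haz.symm c2
      · by_cases c2 : j = z
        · subst c2
          by_cases c3 : i = a
          · subst c3
            exact tri _ b _ hab hbz hij (m1 _ _ hab hij hbz) (m2 _ _ hbz hab.symm hij.symm)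
          · exact m2 _ _ hij c3 haz.symm
        · exact m1 _ _ hij c1 c2
    intro g; exact this trivial
  have stab : ∀ g : P, ∀ x ∈ Y, g * x ∈ Y := by
    intro g
    have hg := gen g
    rw [Subgroup.sup_eq_closure] at hg
    have : (∀ x ∈ Y, g * x ∈ Y) ∧ (∀ x ∈ Y, g⁻¹ * x ∈ Y) := by
      induction hg using Subgroup.closure_induction with
      | mem x hx =>
        rcases hx with hx | hx
        · exact ⟨h1 k (le_max_left _ _) x hx, h1 k (le_max_left _ _) _ (inv_mem hx)⟩
        · exact ⟨h2 k (le_max_right _ _) x hx, h2 k (le_max_right _ _) _ (inv_mem hx)⟩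
      | one => simp
      | mul x y _ _ hx hy =>
        refine ⟨fun w hw => ?_, fun w hw => ?_⟩
        · rw [mul_assoc]; exact hx.1 _ (hy.1 _ hw)
        · rw [mul_inv_rev, mul_assoc]; exact hy.2 _ (hx.2 _ hw)
      | inv x _ hx => exact ⟨hx.2, by simpa using hx.1⟩
    exact this.1
  have : (Set.univ : Set P).Finite := Yfin.subset fun g _ => by simpa using stab g 1 one_mem
  exact Set.finite_univ_iff.1 this

theorem finite (a z b : ι) (ha : ∀ i, a ≤ i) (hz : ∀ i, i ≤ z) (hab : a ≠ b) (hbz : b ≠ z)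
    (haz : a ≠ z) : Finite P := by
  let f := QuotientGroup.mk' (Subgroup.center P)
  have hs := h.map f (QuotientGroup.mk'_surjective _)
  have key : ∀ l, Finite (sg (fun i j => f (e i j)) (fun i j => i ≠ l ∧ j ≠ l)) := by
    intro l
    have h1 := h.center_relIndex l
    have : sg (fun i j => f (e i j)) (fun i j => i ≠ l ∧ j ≠ l) =
        (sg e (fun i j => i ≠ l ∧ j ≠ l)).map f := by
      apply le_antisymm
      · apply sg_le
        intro i j h1 h2
        exact Subgroup.mem_map_of_mem f (sg_mem h1 h2)
      · rw [Subgroup.map_le_iff_le_comap]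
        apply sg_le
        intro i j h1 h2
        exact sg_mem (e := fun i j => f (e i j)) h1 h2
    rw [this]
    rw [← QuotientGroup.ker_mk' (Subgroup.center P), Subgroup.relIndex_ker] at h1
    exact Nat.finite_of_card_ne_zero h1
  have hQ : Finite (P ⧸ Subgroup.center P) := hs.tavgen a z b ha hz hab hbz haz (key a) (key z)
  have hcs : Finite (commutatorSet P) := by
    have : Set.range (fun p : (P ⧸ Subgroup.center P) × (P ⧸ Subgroup.center P) =>
        ⁅p.1.out, p.2.out⁆) = commutatorSet P := by
      ext x
      constructor
      · rintro ⟨p, rfl⟩; exact ⟨_, _, rfl⟩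
      · rintro ⟨u, v, rfl⟩
        refine ⟨(QuotientGroup.mk u, QuotientGroup.mk v), ?_⟩
        obtain ⟨⟨c, hc⟩, h1⟩ := QuotientGroup.mk_out_eq_mul (Subgroup.center P) u
        obtain ⟨⟨d, hd⟩, h2⟩ := QuotientGroup.mk_out_eq_mul (Subgroup.center P) v
        simp only [h1, h2]
        rw [Subgroup.mem_center_iff] at hc hd
        have hcv := hc v
        have hdu := hd u
        have hcd := hc d
        rw [commutatorElement_def, commutatorElement_def, mul_inv_rev, mul_inv_rev]
        have a1 : u * c * (v * d) = u * v * (c * d) := by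
          rw [mul_assoc, ← mul_assoc c, ← hcv]; simp [mul_assoc]
        have a2 : c⁻¹ * u⁻¹ * (d⁻¹ * v⁻¹) = (c * d)⁻¹ * (u⁻¹ * v⁻¹) := by
          have : u⁻¹ * d⁻¹ = d⁻¹ * u⁻¹ := by rw [← mul_inv_rev, ← mul_inv_rev, hdu]
          have h5 : c⁻¹ * d⁻¹ = d⁻¹ * c⁻¹ := by rw [← mul_inv_rev, ← mul_inv_rev, hcd]
          rw [mul_inv_rev, mul_assoc, ← mul_assoc u⁻¹, this, ← h5]; simp [mul_assoc]
        rw [a1, mul_assoc (u * v * (c * d)), a2]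
        group
    rw [← this]
    exact (Set.finite_range _).to_subtype
  have hfin : Finite (commutator P) := inferInstance
  have htop : commutator P = ⊤ := by
    rw [eq_top_iff, ← h.gen, Subgroup.closure_le]
    rintro _ ⟨i, k, hik, rfl⟩
    obtain ⟨j, hji, hjk⟩ : ∃ j, j ≠ i ∧ j ≠ k := by
      by_cases c1 : a ≠ i ∧ a ≠ k
      · exact ⟨a, c1⟩
      by_cases c2 : b ≠ i ∧ b ≠ k
      · exact ⟨b, c2⟩
      refine ⟨z, ?_, ?_⟩ <;> grind
    have e1 := h.rel i j k hji.symm hjk hik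
    rw [← inv_mul_eq_iff_eq_mul] at e1
    rw [← e1]
    have : (e i j)⁻¹ * (e j k * e i j * (e j k)⁻¹) = ⁅(e i j)⁻¹, e j k⁆ := by
      rw [commutatorElement_def]; group
    rw [this]
    exact Subgroup.commutator_mem_commutator trivial trivial
  rw [htop] at hfin
  exact Finite.of_equiv _ Subgroup.topEquiv.toEquiv

end Stein

end P2

end FA

namespace FA

set_option linter.unusedSectionVars false
open FreeGroup (of)
open commutatorElement

section P3

theorem finiteIndex_comm_of_torsion {G : Type*} [Group G] [Group.FG G] (N : Subgroup G)
    [N.FiniteIndex] (h : ∀ g ∈ N, ∃ k, 0 < k ∧ g ^ k ∈ ⁅N, N⁆) : ⁅N, N⁆.FiniteIndex := by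
  have hfg : Group.FG N := inferInstance
  have h2 : Group.FG (Abelianization N) :=
    Group.fg_of_surjective (f := Abelianization.of) (QuotientGroup.mk_surjective)
  have hfin : Finite (Abelianization N) := by
    apply CommGroup.finite_of_fg_isMulTorsion
    intro x
    obtain ⟨g, rfl⟩ := QuotientGroup.mk_surjective x
    obtain ⟨k, hk, hg⟩ := h g.1 g.2
    refine isOfFinOrder_iff_pow_eq_one.2 ⟨k, hk, ?_⟩
    change Abelianization.of g ^ k = 1
    rw [← map_pow]
    refine (QuotientGroup.eq_one_iff (G := N) _).2 ?_
    rw [← Subgroup.map_subtype_commutator] at hg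
    obtain ⟨y, hy, hyg⟩ := hg
    have : y = g ^ k := Subtype.ext hyg
    rw [← this]; exact hy
  have h3 : (commutator N).FiniteIndex := by
    have : Finite (N ⧸ commutator N) := hfin
    exact Subgroup.finiteIndex_of_finite_quotient
  rw [← Subgroup.map_subtype_commutator]
  constructor
  rw [Subgroup.index_map_subtype]
  exact mul_ne_zero h3.index_ne_zero Subgroup.FiniteIndex.index_ne_zero

theorem comm_of_comm_mem {G : Type*} [Group G] (N : Subgroup G) [N.Normal] {g h : G} (hg : g ∈ N)
    (hh : h ∈ N) : Commute (QuotientGroup.mk' ⁅N, N⁆ g) (QuotientGroup.mk' ⁅N, N⁆ h) := by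
  rw [← commutatorElement_eq_one_iff_commute, ← map_commutatorElement]
  exact (QuotientGroup.eq_one_iff _).2 (Subgroup.commutator_mem_commutator hg hh)

/-- elements of `N` that are torsion modulo `⁅N, N⁆` -/
def TT {G : Type*} [Group G] (N : Subgroup G) [N.Normal] : Subgroup G where
  carrier := {g | g ∈ N ∧ ∃ k, 0 < k ∧ g ^ k ∈ ⁅N, N⁆}
  one_mem' := ⟨N.one_mem, 1, one_pos, by simp⟩
  inv_mem' := by
    rintro g ⟨hg, k, hk, h⟩
    exact ⟨inv_mem hg, k, hk, by rw [inv_pow]; exact inv_mem h⟩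
  mul_mem' := by
    rintro g h ⟨hg, k, hk, h1⟩ ⟨hh, l, hl, h2⟩
    refine ⟨mul_mem hg hh, k * l, Nat.mul_pos hk hl, ?_⟩
    have c := comm_of_comm_mem N hg hh
    rw [← QuotientGroup.eq_one_iff, ← QuotientGroup.mk'_apply, map_pow] at h1 h2 ⊢
    rw [map_mul, c.mul_pow, pow_mul, h1, mul_comm k, pow_mul, h2]; simp

theorem TT_normal {G : Type*} [Group G] (N : Subgroup G) [N.Normal] : (TT N).Normal := by
  constructor
  rintro g ⟨hg, k, hk, h⟩ a
  refine ⟨Subgroup.Normal.conj_mem inferInstance g hg a, k, hk, ?_⟩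
  rw [conj_pow]
  exact Subgroup.Normal.conj_mem inferInstance _ h a

variable {ι : Type*} [DecidableEq ι]

def IAg (ι : Type*) : Subgroup (MulAut (FreeGroup ι)) where
  carrier := {e | ∀ x, Abelianization.of (e x) = Abelianization.of x}
  one_mem' := fun _ => rfl
  mul_mem' := by
    intro a b ha hb x
    have h : (a * b) x = a (b x) := rfl
    rw [h, ha (b x), hb x]
  inv_mem' := by
    intro a ha x
    have h := ha (a⁻¹ x)
    have h' : a (a⁻¹ x) = x := a.apply_symm_apply x
    rw [h'] at h
    exact h.symm

theorem mem_IAg {a : MulAut (FreeGroup ι)} :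
    a ∈ IAg ι ↔ ∀ x, Abelianization.of (a x) = Abelianization.of x := Iff.rfl

theorem mem_IAg_of {a : MulAut (FreeGroup ι)}
    (h : ∀ i, Abelianization.of (a (of i)) = Abelianization.of (of i)) : a ∈ IAg ι := by
  have : (Abelianization.of).comp a.toMonoidHom = Abelianization.of := by
    apply FreeGroup.ext_hom; exact h
  intro x; exact DFunLike.congr_fun this x

instance IAg_normal : (IAg ι).Normal := by
  constructor
  intro a ha g
  rw [mem_IAg] at ha ⊢
  intro x
  have : Abelianization.map g.toMonoidHom (Abelianization.of (a (g⁻¹ x))) =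
      Abelianization.map g.toMonoidHom (Abelianization.of (g⁻¹ x)) := by rw [ha]
  simpa using this

theorem dl_mem_IAg (i : ι) (w : B i) : dl i w ∈ IAg ι := by
  apply mem_IAg_of
  intro j
  by_cases h : j = i
  · subst h; simp [mul_comm]
  · rw [dl_ne h]

theorem K_mem_IAg {i j : ι} (h : j ≠ i) : K h ∈ IAg ι := dl_mem_IAg _ _

theorem conj_mem_IAg (w : FreeGroup ι) : MulAut.conj w ∈ IAg ι := by
  rw [mem_IAg]; intro x; simp [mul_comm]

theorem rho_mem_IAg (i : ι) {w : B i} (hw : w ∈ commutator (B i)) : rho i w ∈ IAg ι := by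
  apply mem_IAg_of
  intro j
  by_cases h : j = i
  · subst h
    have : Abelianization.of (inc j w) = 1 := by
      have h1 : (Abelianization.of.comp (inc j)) w = 1 :=
        Abelianization.commutator_subset_ker _ hw
      exact h1
    simp [this]
  · rw [rho_ne h]

def DD (ι : Type*) [DecidableEq ι] : Subgroup (MulAut (FreeGroup ι)) :=
  Subgroup.normalClosure {g | ∃ (i j : ι) (h : j ≠ i), g = K h}

instance DD_normal : (DD ι).Normal := Subgroup.normalClosure_normal

theorem K_mem_DD {i j : ι} (h : j ≠ i) : K h ∈ DD ι := Subgroup.subset_normalClosure ⟨i, j, h, rfl⟩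

theorem DD_le {H : Subgroup (MulAut (FreeGroup ι))} [H.Normal] (h : ∀ (i j : ι) (h : j ≠ i), K h ∈ H) :
    DD ι ≤ H := Subgroup.normalClosure_le_normal (by rintro _ ⟨i, j, hij, rfl⟩; exact h i j hij)

theorem DD_le_IAg : DD ι ≤ IAg ι := DD_le fun _ _ h => K_mem_IAg h

theorem R_conj_R {i j k : ι} (hij : i ≠ j) (hjk : j ≠ k) (hik : i ≠ k) :
    R hjk.symm * R hij.symm * (R hjk.symm)⁻¹ = R hij.symm * R hik.symm := by
  conv_lhs => rw [← ext_R hij.symm hik.symm hjk.symm]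
  rw [R, R, R, ext_rho, ← map_mul]
  congr 1
  simp [g']

theorem K_conj_R {i j k : ι} (hij : i ≠ j) (hjk : j ≠ k) (hik : i ≠ k) :
    K hjk.symm * R hij.symm * (K hjk.symm)⁻¹ = (R hik.symm)⁻¹ * R hij.symm * R hik.symm := by
  conv_lhs => rw [← ext_K hij.symm hik.symm hjk.symm]
  rw [R, R, ext_rho, ← map_inv, ← map_mul, ← map_mul]
  congr 1
  simp [g']

theorem R_pow_conj_dl {i j k : ι} (hij : i ≠ j) (hjk : j ≠ k) (hik : i ≠ k) (m : ℕ) :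
    R hjk.symm ^ m * K hij.symm * (R hjk.symm ^ m)⁻¹ = K hij.symm * K hik.symm ^ m := by
  conv_lhs => rw [← ext_R hij.symm hik.symm hjk.symm]
  rw [K, K, ← map_pow, ext_dl, ← map_pow, ← map_mul]
  congr 1
  rw [R_pow]
  unfold g'
  rw [rho_same, map_pow, inc_of]

theorem R_comm {i j k l : ι} (hij : i ≠ j) (hkl : k ≠ l) (hjk : j ≠ k) (hil : i ≠ l) (hik : i ≠ k) :
    Commute (R hij.symm) (R hkl.symm) := by
  apply autExt
  intro x
  by_cases h1 : x = i
  · subst h1; simp [R_ne hkl.symm hik, R_ne hkl.symm hjk]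
  · by_cases h2 : x = k
    · subst h2; simp [R_ne hij.symm hik.symm, R_ne hij.symm hil.symm]
    · simp [R_ne hij.symm h1, R_ne hkl.symm h2]

theorem N_comm_finiteIndex [Fintype ι] (h3 : ∀ i k : ι, ∃ j, j ≠ i ∧ j ≠ k)
    (N : Subgroup (MulAut (FreeGroup ι))) [N.Normal] [N.FiniteIndex] (hD : IAg ι ≤ N)
    (hS : (⁅N, N⁆ ⊔ DD ι).FiniteIndex) : ⁅N, N⁆.FiniteIndex := by
  have := G_fg (ι := ι)
  apply finiteIndex_comm_of_torsion
  have hle : ⁅N, N⁆ ⊔ DD ι ≤ TT N := by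
    have := TT_normal N
    refine sup_le (fun x hx => ⟨Subgroup.commutator_le_left _ _ hx, 1, one_pos, by simpa using hx⟩)
      (DD_le ?_)
    intro i k hik
    obtain ⟨j, hji, hjk⟩ := h3 i k
    refine ⟨hD (K_mem_IAg _), N.index, Nat.pos_of_ne_zero Subgroup.FiniteIndex.index_ne_zero, ?_⟩
    have e := R_pow_conj_dl hji.symm hjk hik.symm N.index
    rw [← inv_mul_eq_iff_eq_mul] at e
    rw [← e]
    have : (K hji.symm.symm)⁻¹ * (R hjk.symm ^ N.index * K hji.symm.symm * (R hjk.symm ^ N.index)⁻¹)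
      = ⁅(K hji.symm.symm)⁻¹, R hjk.symm ^ N.index⁆ := by rw [commutatorElement_def]; group
    rw [this]
    exact Subgroup.commutator_mem_commutator (inv_mem (hD (K_mem_IAg _))) (N.pow_index_mem _)
  intro g _
  obtain ⟨k, hk, -, hkg⟩ := Subgroup.exists_pow_mem_of_index_ne_zero
    hS.index_ne_zero g
  obtain ⟨-, l, hl, h⟩ := hle hkg
  exact ⟨k * l, Nat.mul_pos hk hl, by rw [pow_mul]; exact h⟩

end P3

section P3b
variable {ι : Type*} [LinearOrder ι] [Fintype ι]

theorem sprime (a z b : ι) (ha : ∀ i, a ≤ i) (hz : ∀ i, i ≤ z) (hab : a ≠ b) (hbz : b ≠ z)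
    (haz : a ≠ z) (S : Subgroup (MulAut (FreeGroup ι))) [S.Normal] [S.FiniteIndex] :
    (⁅S, S⁆ ⊔ DD ι).FiniteIndex := by
  set L := ⁅S, S⁆ ⊔ DD ι with hL
  let π := QuotientGroup.mk' L
  have hπ1 : ∀ x, x ∈ L → π x = 1 := fun x hx => (QuotientGroup.eq_one_iff x).2 hx
  have hK : ∀ {i j : ι} (h : j ≠ i), π (K h) = 1 := fun h =>
    hπ1 _ (Subgroup.mem_sup_right (K_mem_DD h))
  let e : ι → ι → (MulAut (FreeGroup ι) ⧸ L) := fun i j => if h : i ≠ j then π (R h.symm) else 1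
  have he : ∀ {i j : ι} (h : i ≠ j), e i j = π (R h.symm) := fun h => by simp [e, h]
  have hS : ∀ x y, x ∈ S → y ∈ S → Commute (π x) (π y) := by
    intro x y hx hy
    rw [← commutatorElement_eq_one_iff_commute, ← map_commutatorElement]
    exact hπ1 _ (Subgroup.mem_sup_left (Subgroup.commutator_mem_commutator hx hy))
  have hrel : ∀ i j k, i ≠ j → j ≠ k → i ≠ k → e j k * e i j * (e j k)⁻¹ = e i j * e i k := by
    intro i j k hij hjk hik
    rw [he hij, he hjk, he hik, ← map_mul, ← map_inv, ← map_mul, R_conj_R hij hjk hik, map_mul]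
  have hcomm : ∀ i j k l, i ≠ j → k ≠ l → j ≠ k → i ≠ l → Commute (e i j) (e k l) := by
    intro i j k l hij hkl hjk hil
    by_cases hik : i = k
    · subst hik
      by_cases hjl : j = l
      · subst hjl; exact Commute.refl _
      · have := congrArg π (K_conj_R hij hjl hil)
        simp only [map_mul, map_inv, hK, ← he hij, ← he hil] at this
        simp only [one_mul, inv_one, mul_one] at this
        rw [mul_assoc, eq_inv_mul_iff_mul_eq] at this
        exact this.symm
    · rw [he hij, he hkl]
      exact (R_comm hij hkl hjk hil hik).map π
  set p := S.index with hp
  have hp0 : p ≠ 0 := Subgroup.FiniteIndex.index_ne_zero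
  have htors : ∀ i k, i ≠ k → e i k ^ (p * p) = 1 := by
    intro i k hik
    obtain ⟨j, hji, hjk⟩ : ∃ j, j ≠ i ∧ j ≠ k := by
      by_cases c1 : a ≠ i ∧ a ≠ k
      · exact ⟨a, c1⟩
      by_cases c2 : b ≠ i ∧ b ≠ k
      · exact ⟨b, c2⟩
      refine ⟨z, ?_, ?_⟩ <;> grind
    have r := hrel i j k hji.symm hjk hik
    have c1 : Commute (e i j) (e i k) := hcomm _ _ _ _ hji.symm hik hji hik
    have c2 : Commute (e j k) (e i k) := hcomm _ _ _ _ hjk hik hik.symm hjk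
    have r1 : ∀ m : ℕ, e j k ^ m * e i j * (e j k ^ m)⁻¹ = e i j * e i k ^ m := by
      intro m
      induction m with
      | zero => simp
      | succ m ih =>
        rw [pow_succ', mul_inv_rev]
        calc e j k * e j k ^ m * e i j * ((e j k ^ m)⁻¹ * (e j k)⁻¹)
            = e j k * (e j k ^ m * e i j * (e j k ^ m)⁻¹) * (e j k)⁻¹ := by simp only [mul_assoc]
          _ = (e j k * e i j * (e j k)⁻¹) * e i k ^ m := by
            rw [ih, ← mul_assoc, mul_assoc _ _ (e j k)⁻¹, mul_assoc _ _ (e i k ^ m),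
              ((c2.inv_left).pow_right m).eq]
          _ = _ := by rw [r, pow_succ', mul_assoc]
    have r2 : e j k ^ p * e i j ^ p * (e j k ^ p)⁻¹ = e i j ^ p * e i k ^ (p * p) := by
      rw [← conj_pow, r1, (c1.pow_right p).mul_pow, pow_mul]
    have c3 : Commute (e j k ^ p) (e i j ^ p) := by
      rw [he hjk, he hji.symm, ← map_pow, ← map_pow]
      exact hS _ _ (S.pow_index_mem _) (S.pow_index_mem _)
    rw [c3.eq, mul_inv_cancel_right] at r2
    simpa using r2.symm
  set k : Set (MulAut (FreeGroup ι) ⧸ L) := {g | ∃ i j, i ≠ j ∧ g = e i j} with hk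
  have hmem : ∀ i j, e i j ∈ Subgroup.closure k := by
    intro i j
    by_cases hij : i = j
    · have : e i j = 1 := by simp [e, hij]
      rw [this]; exact one_mem _
    · exact Subgroup.subset_closure ⟨i, j, hij, rfl⟩
  have hst : Stein (P := Subgroup.closure k) (fun i j => ⟨e i j, hmem i j⟩) (p * p) :=
    { gen := by
        rw [← Subgroup.closure_closure_coe_preimage (k := k)]
        congr 1
        ext x
        constructor
        · rintro ⟨i, j, hij, rfl⟩; exact ⟨i, j, hij, rfl⟩
        · rintro ⟨i, j, hij, h⟩; exact ⟨i, j, hij, Subtype.ext h⟩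
      pos := Nat.mul_pos (Nat.pos_of_ne_zero hp0) (Nat.pos_of_ne_zero hp0)
      tors := fun i j h => Subtype.ext (htors i j h)
      comm := fun i j k l h1 h2 h3 h4 => Subtype.ext (hcomm i j k l h1 h2 h3 h4)
      rel := fun i j k h1 h2 h3 => Subtype.ext (hrel i j k h1 h2 h3) }
  have hfin := hst.finite a z b ha hz hab hbz haz
  have hE : (E ι).map π ≤ Subgroup.closure k := by
    rw [Subgroup.map_le_iff_le_comap, E, Subgroup.closure_le]
    rintro _ ⟨i, j, hij, rfl | rfl⟩
    · change π (R hij) ∈ Subgroup.closure k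
      rw [← he hij.symm]; exact hmem _ _
    · change π (Lt hij) ∈ Subgroup.closure k
      have h1 := hK hij
      rw [K, dl_eq_mul, map_mul] at h1
      rw [Lt, eq_inv_of_mul_eq_one_left h1]
      refine inv_mem ?_
      have := hmem i j
      rw [he hij.symm] at this; exact this
  have hfin2 : Finite ((E ι).map π) :=
    ((Set.toFinite (Subgroup.closure k : Set _)).subset hE).to_subtype
  have hrE : L.relIndex (E ι) ≠ 0 := by
    rw [← QuotientGroup.ker_mk' L, Subgroup.relIndex_ker]
    exact Nat.card_pos.ne'
  have hEi := (E_finiteIndex (ι := ι)).index_ne_zero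
  rw [← Subgroup.relIndex_top_right] at hEi
  have := Subgroup.relIndex_ne_zero_trans hrE hEi
  rw [Subgroup.relIndex_top_right] at this
  exact ⟨this⟩

end P3b

end FA

namespace FA

set_option linter.unusedSectionVars false
open FreeGroup (of)
open commutatorElement

section P4
variable {ι : Type*} [DecidableEq ι]

theorem free_comm_le {α : Type*} (H : Subgroup (FreeGroup α)) [H.Normal]
    (h : ∀ j l : α, ⁅of j, of l⁆ ∈ H) : commutator (FreeGroup α) ≤ H := by
  have c1 : ∀ j l : α, Commute (QuotientGroup.mk' H (of j)) (QuotientGroup.mk' H (of l)) := by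
    intro j l
    rw [← commutatorElement_eq_one_iff_commute, ← map_commutatorElement]
    exact (QuotientGroup.eq_one_iff _).2 (h j l)
  have c2 : ∀ (j : α) (y : FreeGroup α),
      Commute (QuotientGroup.mk' H (of j)) (QuotientGroup.mk' H y) := by
    intro j y
    induction y using FreeGroup.induction_on with
    | C1 => simp
    | of l => exact c1 j l
    | inv_of l h => rw [map_inv]; exact (c1 j l).inv_right
    | mul x y hx hy => rw [map_mul]; exact hx.mul_right hy
  have c3 : ∀ (x y : FreeGroup α),
      Commute (QuotientGroup.mk' H x) (QuotientGroup.mk' H y) := by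
    intro x y
    induction x using FreeGroup.induction_on with
    | C1 => simp
    | of l => exact c2 l y
    | inv_of l h => rw [map_inv]; exact (c2 l y).inv_left
    | mul x y hx hy => rw [map_mul]; exact hx.mul_left hy
  rw [commutator_def, Subgroup.commutator_le]
  intro x _ y _
  have := c3 x y
  rw [← commutatorElement_eq_one_iff_commute, ← map_commutatorElement] at this
  exact (QuotientGroup.eq_one_iff _).1 this

def MM (ι : Type*) [DecidableEq ι] : Subgroup (MulAut (FreeGroup ι)) :=
  Subgroup.closure {g | ∃ (i : ι) (w : B i), g = dl i w ∨ (w ∈ commutator (B i) ∧ g = rho i w)}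

theorem dl_mem_MM (i : ι) (w : B i) : dl i w ∈ MM ι :=
  Subgroup.subset_closure ⟨i, w, Or.inl rfl⟩
theorem rho_mem_MM (i : ι) {w : B i} (hw : w ∈ commutator (B i)) : rho i w ∈ MM ι :=
  Subgroup.subset_closure ⟨i, w, Or.inr ⟨hw, rfl⟩⟩
theorem K_mem_MM {i j : ι} (h : j ≠ i) : K h ∈ MM ι := dl_mem_MM _ _

theorem rho_comm_mem_MM (i : ι) (x y : B i) : rho i ⁅x, y⁆ ∈ MM ι :=
  rho_mem_MM i (Subgroup.commutator_mem_commutator (Subgroup.mem_top _) (Subgroup.mem_top _))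

theorem MM_le (Z : Subgroup (MulAut (FreeGroup ι))) (h1 : ∀ {i j : ι} (h : j ≠ i), K h ∈ Z)
    (h2 : ∀ {i j l : ι} (hj : j ≠ i) (hl : l ≠ i), j ≠ l → (∀ i w, dl i w ∈ Z) → rho i ⁅g' hj, g' hl⁆ ∈ Z) :
    MM ι ≤ Z := by
  have hd : ∀ i w, dl i w ∈ Z := by
    intro i w
    induction w using FreeGroup.induction_on with
    | C1 => rw [map_one]; exact one_mem _
    | of l => exact h1 l.2
    | inv_of l h => rw [map_inv]; exact inv_mem h
    | mul x y hx hy => rw [map_mul]; exact mul_mem hx hy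
  refine (Subgroup.closure_le _).2 ?_
  rintro _ ⟨i, w, rfl | ⟨hw, rfl⟩⟩
  · exact hd i w
  · have : (Z.comap (rho i)).Normal := by
      constructor
      intro c hc b
      rw [Subgroup.mem_comap] at hc ⊢
      rw [← dl_rho]
      exact mul_mem (mul_mem (hd _ _) hc) (inv_mem (hd _ _))
    refine free_comm_le (Z.comap (rho i)) ?_ hw
    intro j l
    by_cases hjl : j = l
    · subst hjl; simp [one_mem]
    · exact h2 j.2 l.2 (fun h => hjl (Subtype.ext h)) hd

theorem conj_comap_mem {s g : MulAut (FreeGroup ι)} {M : Subgroup (MulAut (FreeGroup ι))} :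
    g ∈ M.comap (MulAut.conj s).toMonoidHom ↔ s * g * s⁻¹ ∈ M := Iff.rfl

def Ki {i j : ι} (h : j ≠ i) : MulAut (FreeGroup ι) := (K h)⁻¹
theorem Kinv_same {i j : ι} (h : j ≠ i) : Ki h (of i) = of j * of i * (of j)⁻¹ := by
  rw [Ki, K, ← map_inv, dl_same]; simp
theorem Kinv_ne {i j k : ι} (h : j ≠ i) (hk : k ≠ i) : Ki h (of k) = of k := by
  rw [Ki, K, ← map_inv, dl_ne hk]

def C3 (i : ι) (x y : B i) : MulAut (FreeGroup ι) := rho i ⁅x, y⁆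
theorem C3_mem (i : ι) (x y : B i) : C3 i x y ∈ MM ι := rho_comm_mem_MM i x y
theorem C3_same (i : ι) (x y : B i) :
    C3 i x y (of i) = of i * (inc i x * inc i y * (inc i x)⁻¹ * (inc i y)⁻¹) := by
  rw [C3, rho_same, map_commutatorElement, commutatorElement_def]
theorem C3_ne {i k : ι} (hk : k ≠ i) (x y : B i) : C3 i x y (of k) = of k := rho_ne hk _

theorem id1 {a b j : ι} (hab : a ≠ b) (hja : j ≠ a) (hjb : j ≠ b) :
    R hab.symm * K hjb = C3 a (g' hab.symm) (g' hja)⁻¹ * K hjb * R hab.symm := by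
  apply autExt
  intro x
  by_cases h1 : x = a
  · subst h1
    simp [K_ne hjb hab, C3_same, C3_ne hja, C3_ne hab.symm]
    group
  by_cases h2 : x = b
  · subst h2
    simp [R_ne hab.symm, C3_ne, hja, hab.symm]
  · simp [R_ne hab.symm h1, K_ne hjb h2, C3_ne h1]

theorem id1' {a b j : ι} (hab : a ≠ b) (hja : j ≠ a) (hjb : j ≠ b) :
    K hjb * R hab.symm = R hab.symm * (C3 a (g' hab.symm)⁻¹ (g' hja)⁻¹ * K hjb) := by
  apply autExt
  intro x
  by_cases h1 : x = a
  · subst h1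
    simp [K_ne hjb hab, C3_same, R_ne hab.symm hja, R_ne hab.symm hab.symm]
    group
  by_cases h2 : x = b
  · subst h2
    simp [R_ne hab.symm, C3_ne, hja, hab.symm]
  · simp [R_ne hab.symm h1, K_ne hjb h2, C3_ne h1]

theorem id2 {a b : ι} (hab : a ≠ b) :
    R hab.symm * K hab = K hab.symm * K hab * R hab.symm := by
  apply autExt
  intro x
  by_cases h1 : x = a
  · subst h1
    simp [K_ne hab hab, K_ne hab.symm hab.symm]
    group
  by_cases h2 : x = b
  · subst h2
    simp [R_ne hab.symm hab.symm, K_ne hab.symm hab.symm]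
    group
  · simp [R_ne hab.symm h1, K_ne hab h2, K_ne hab.symm h1]

theorem id2' {a b : ι} (hab : a ≠ b) :
    K hab * R hab.symm = R hab.symm * (Ki hab.symm * K hab) := by
  apply autExt
  intro x
  by_cases h1 : x = a
  · subst h1
    simp [K_ne hab hab, R_ne hab.symm hab.symm, Kinv_same]
    group
  by_cases h2 : x = b
  · subst h2
    simp [R_ne hab.symm hab.symm, Kinv_ne hab.symm hab.symm, Kinv_same]
    group
  · simp [R_ne hab.symm h1, K_ne hab h2, Kinv_ne hab.symm h1]

theorem id3 {a b j l : ι} (hab : a ≠ b) (hja : j ≠ a) (hjb : j ≠ b) (hla : l ≠ a) (hlb : l ≠ b) :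
    R hab.symm * C3 b (g' hjb) (g' hlb) =
    C3 a (g' hab.symm * g' hla * (g' hab.symm)⁻¹) (g' hab.symm * g' hja * (g' hab.symm)⁻¹) *
      C3 b (g' hjb) (g' hlb) * R hab.symm := by
  apply autExt
  intro x
  by_cases h1 : x = a
  · subst h1
    simp [C3_ne hab, C3_same, C3_ne hja, C3_ne hla, C3_ne hab.symm]
    group
  by_cases h2 : x = b
  · subst h2
    simp [R_ne hab.symm, C3_ne, hja, hab.symm, C3_same, hla]
  · simp [R_ne hab.symm h1, C3_ne h2, C3_ne h1]

theorem id3' {a b j l : ι} (hab : a ≠ b) (hja : j ≠ a) (hjb : j ≠ b) (hla : l ≠ a) (hlb : l ≠ b) :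
    C3 b (g' hjb) (g' hlb) * R hab.symm =
    R hab.symm * (C3 a (g' hja) (g' hla) * C3 b (g' hjb) (g' hlb)) := by
  apply autExt
  intro x
  by_cases h1 : x = a
  · subst h1
    simp [C3_ne hab, C3_same, R_ne hab.symm, hja, hla]
    group
  by_cases h2 : x = b
  · subst h2
    simp [R_ne hab.symm, C3_ne, hja, hab.symm, C3_same, hla]
  · simp [R_ne hab.symm h1, C3_ne h2, C3_ne h1]

theorem id4 {a b l : ι} (hab : a ≠ b) (hla : l ≠ a) (hlb : l ≠ b) :
    R hab.symm * tv b (g' hab * (g' hlb)⁻¹ * (g' hab)⁻¹, (g' hlb)⁻¹) =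
    K hab.symm * C3 b (g' hab) (g' hlb) * Ki hla * Ki hab.symm * R hab.symm := by
  apply autExt
  intro x
  by_cases h1 : x = a
  · subst h1
    simp [tv_ne hab, C3_ne, hab, hlb, Kinv_same, Kinv_ne, hab.symm, C3_same, K_ne, hla]
    group
  by_cases h2 : x = b
  · subst h2
    simp [tv_same, R_ne, Kinv_ne, K_ne, hab.symm, hla, C3_same]
    group
  · simp [tv_ne h2, R_ne hab.symm h1, Kinv_ne _ h1, C3_ne h2, K_ne _ h1]

theorem id4' {a b l : ι} (hab : a ≠ b) (hla : l ≠ a) (hlb : l ≠ b) :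
    tv b ((g' hab)⁻¹ * (g' hlb)⁻¹ * (g' hab), (g' hlb)⁻¹) * R hab.symm =
    R hab.symm * (C3 b (g' hab)⁻¹ (g' hlb) * Ki hla) := by
  apply autExt
  intro x
  by_cases h1 : x = a
  · subst h1
    simp [tv_ne hab, C3_ne, hab, hlb, Kinv_same, R_ne, hla, hab.symm]
    group
  by_cases h2 : x = b
  · subst h2
    simp [tv_same, R_ne, Kinv_ne, hab.symm, hla, C3_same]
    group
  · simp [tv_ne h2, R_ne hab.symm h1, Kinv_ne _ h1, C3_ne h2]

theorem tv_split (i : ι) (u v : B i) : tv i (u, v) = dl i u * rho i (u⁻¹ * v) := by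
  rw [dl_eq, rho_eq, ← map_mul]; simp

theorem eq_conj {G : Type*} [Group G] {s x y : G} (h : s * x = y * s) : s * x * s⁻¹ = y := by
  rw [h]; group
theorem eq_conj' {G : Type*} [Group G] {s x y : G} (h : x * s = s * y) :
    s⁻¹ * x * s⁻¹⁻¹ = y := by
  rw [inv_inv, mul_assoc, h]; group

theorem map_commutator_mem {G : Type*} [Group G] (f : G →* G) {w : G} (hw : w ∈ commutator G) :
    f w ∈ commutator G := by
  have : (commutator G).map f ≤ commutator G := by
    rw [commutator_def, Subgroup.map_commutator]
    exact Subgroup.commutator_mono le_top le_top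
  exact this ⟨w, hw, rfl⟩

theorem MM_le_conj {a b : ι} (hab : a ≠ b) (s : MulAut (FreeGroup ι))
    (hs1 : ∃ u : B a, s = rho a u)
    (hs2 : ∀ i, i ≠ a → i ≠ b → ∃ ν, s = ext i ν)
    (h1 : s * K hab * s⁻¹ ∈ MM ι)
    (h2 : ∀ {j} (hjb : j ≠ b), j ≠ a → s * K hjb * s⁻¹ ∈ MM ι)
    (h3 : ∀ {j l} (hjb : j ≠ b) (hlb : l ≠ b), j ≠ a → l ≠ a →
      s * C3 b (g' hjb) (g' hlb) * s⁻¹ ∈ MM ι)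
    (h4 : ∀ {l} (hlb : l ≠ b), l ≠ a → (∀ w, s * dl b w * s⁻¹ ∈ MM ι) →
      s * C3 b (g' hab) (g' hlb) * s⁻¹ ∈ MM ι) :
    MM ι ≤ (MM ι).comap (MulAut.conj s).toMonoidHom := by
  obtain ⟨u, hu⟩ := hs1
  have ha1 : ∀ w, s * dl a w * s⁻¹ ∈ MM ι := by
    intro w
    have : s * dl a w * s⁻¹ = dl a w * rho a ⁅w⁻¹, u⁆ := by
      rw [hu, dl_eq, rho_eq, rho_eq, ← map_mul, ← map_inv, ← map_mul, ← map_mul]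
      congr 1
      simp [commutatorElement_def, mul_assoc]
    rw [this]
    exact mul_mem (dl_mem_MM _ _) (rho_comm_mem_MM _ _ _)
  have ha2 : ∀ w ∈ commutator (B a), s * rho a w * s⁻¹ ∈ MM ι := by
    intro w hw
    have : s * rho a w * s⁻¹ = rho a (u * w * u⁻¹) := by
      rw [hu, map_mul, map_mul, map_inv]
    rw [this]
    exact rho_mem_MM _ (Subgroup.Normal.conj_mem inferInstance _ hw _)
  refine MM_le _ ?_ ?_
  · intro i j hij
    rw [conj_comap_mem]
    by_cases hia : i = a
    · subst hia; exact ha1 _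
    by_cases hib : i = b
    · subst hib
      by_cases hja : j = a
      · subst hja; exact h1
      · exact h2 _ hja
    obtain ⟨ν, rfl⟩ := hs2 i hia hib
    rw [K, ext_dl]; exact dl_mem_MM _ _
  · intro i j l hj hl hjl hd
    have hc : ∀ {i : ι} (x y : B i), ⁅x, y⁆ ∈ commutator (B i) := fun x y =>
      Subgroup.commutator_mem_commutator (Subgroup.mem_top _) (Subgroup.mem_top _)
    rw [conj_comap_mem]
    by_cases hia : i = a
    · subst hia; exact ha2 _ (hc _ _)
    by_cases hib : i = b
    · subst hib
      by_cases hja : j = a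
      · subst hja; exact h4 _ hjl.symm (hd _)
      by_cases hla : l = a
      · subst hla
        have := inv_mem (h4 hj hja (hd _))
        rw [← commutatorElement_inv, map_inv]
        rw [C3] at this
        simpa [mul_assoc] using this
      · exact h3 _ _ hja hla
    obtain ⟨ν, rfl⟩ := hs2 i hia hib
    rw [ext_rho]; exact rho_mem_MM _ (map_commutator_mem ν.toMonoidHom (hc _ _))

theorem MM_conj_R {a b : ι} (hab : a ≠ b) :
    MM ι ≤ (MM ι).comap (MulAut.conj (R hab.symm)).toMonoidHom := by
  apply MM_le_conj hab
  · exact ⟨_, rfl⟩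
  · intro i hia hib; exact ⟨_, (ext_R (Ne.symm hia) (Ne.symm hib) hab.symm).symm⟩
  · rw [eq_conj (id2 hab)]; exact mul_mem (K_mem_MM _) (K_mem_MM _)
  · intro j hjb hja
    rw [eq_conj (id1 hab hja hjb)]; exact mul_mem (C3_mem _ _ _) (K_mem_MM _)
  · intro j l hjb hlb hja hla
    rw [eq_conj (id3 hab hja hjb hla hlb)]; exact mul_mem (C3_mem _ _ _) (C3_mem _ _ _)
  · intro l hlb hla hd
    have h := eq_conj (id4 hab hla hlb)
    rw [tv_split] at h
    have h0 := hd (g' hab * (g' hlb)⁻¹ * (g' hab)⁻¹)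
    have e : (g' hab * (g' hlb)⁻¹ * (g' hab)⁻¹)⁻¹ * (g' hlb)⁻¹ = ⁅g' hab, g' hlb⁆ := by
      rw [commutatorElement_def]; group
    rw [e] at h
    have h5 : R hab.symm * dl b (g' hab * (g' hlb)⁻¹ * (g' hab)⁻¹) * (R hab.symm)⁻¹ *
      (R hab.symm * C3 b (g' hab) (g' hlb) * (R hab.symm)⁻¹) ∈ MM ι := by
      rw [conj_mul, C3, h]
      exact mul_mem (mul_mem (mul_mem (K_mem_MM _) (C3_mem _ _ _)) (inv_mem (K_mem_MM _)))
        (inv_mem (K_mem_MM _))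
    exact (Subgroup.mul_mem_cancel_left _ h0).1 h5

theorem MM_conj_Rinv {a b : ι} (hab : a ≠ b) :
    MM ι ≤ (MM ι).comap (MulAut.conj (R hab.symm)⁻¹).toMonoidHom := by
  apply MM_le_conj hab
  · exact ⟨(g' hab.symm)⁻¹, by rw [map_inv]; rfl⟩
  · intro i hia hib
    exact ⟨(_)⁻¹, by rw [map_inv, ext_R (Ne.symm hia) (Ne.symm hib) hab.symm]⟩
  · rw [eq_conj' (id2' hab)]; exact mul_mem (inv_mem (K_mem_MM _)) (K_mem_MM _)
  · intro j hjb hja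
    rw [eq_conj' (id1' hab hja hjb)]; exact mul_mem (C3_mem _ _ _) (K_mem_MM _)
  · intro j l hjb hlb hja hla
    rw [eq_conj' (id3' hab hja hjb hla hlb)]; exact mul_mem (C3_mem _ _ _) (C3_mem _ _ _)
  · intro l hlb hla hd
    have h := eq_conj' (id4' hab hla hlb)
    rw [tv_split] at h
    set s := R hab.symm
    have h0 := hd ((g' hab)⁻¹ * (g' hlb)⁻¹ * (g' hab))
    have h6 := hd (g' hab)
    have e : ((g' hab)⁻¹ * (g' hlb)⁻¹ * (g' hab))⁻¹ * (g' hlb)⁻¹ = ⁅(g' hab)⁻¹, g' hlb⁆ := by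
      rw [commutatorElement_def]; group
    rw [e] at h
    have h5 : s⁻¹ * dl b ((g' hab)⁻¹ * (g' hlb)⁻¹ * (g' hab)) * s⁻¹⁻¹ *
      (s⁻¹ * C3 b (g' hab)⁻¹ (g' hlb) * s⁻¹⁻¹) ∈ MM ι := by
      rw [conj_mul, C3, h]
      exact mul_mem (C3_mem _ _ _) (inv_mem (K_mem_MM _))
    have h7 := (Subgroup.mul_mem_cancel_left _ h0).1 h5
    have e2 : C3 b (g' hab) (g' hlb) =
        dl b (g' hab) * (C3 b (g' hab)⁻¹ (g' hlb))⁻¹ * (dl b (g' hab))⁻¹ := by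
      rw [C3, C3, ← map_inv, dl_rho]
      congr 1
      simp only [commutatorElement_def]; group
    have e3 : s⁻¹ * C3 b (g' hab) (g' hlb) * s⁻¹⁻¹ = (s⁻¹ * dl b (g' hab) * s⁻¹⁻¹) *
      (s⁻¹ * C3 b (g' hab)⁻¹ (g' hlb) * s⁻¹⁻¹)⁻¹ * (s⁻¹ * dl b (g' hab) * s⁻¹⁻¹)⁻¹ := by
      rw [e2]; group
    rw [e3]
    exact mul_mem (mul_mem h6 (inv_mem h7)) (inv_mem h6)

theorem MM_norm {s m : MulAut (FreeGroup ι)} (hs : s ∈ E ι) (hm : m ∈ MM ι) :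
    s * m * s⁻¹ ∈ MM ι := by
  have hR : ∀ {a b : ι} (hab : a ≠ b), R hab.symm ∈ Subgroup.normalizer (MM ι : Set _) := by
    intro a b hab
    rw [Subgroup.mem_normalizer_iff]
    intro x
    constructor
    · intro hx; exact MM_conj_R hab hx
    · intro hx
      have := MM_conj_Rinv hab hx
      rw [conj_comap_mem] at this
      simpa [mul_assoc] using this
  have hE : E ι ≤ Subgroup.normalizer (MM ι : Set _) := by
    rw [E, Subgroup.closure_le]
    rintro _ ⟨i, j, hij, rfl | rfl⟩
    · exact hR hij.symm
    · have : Lt hij = K hij * (R hij)⁻¹ := by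
        rw [K, dl_eq_mul, Lt, R]; group
      rw [this]
      exact mul_mem (Subgroup.le_normalizer (K_mem_MM _)) (inv_mem (hR hij.symm))
  exact (Subgroup.mem_normalizer_iff.1 (hE hs) m).1 hm

end P4
end FA

namespace FA

set_option linter.unusedSectionVars false
open FreeGroup (of)
open commutatorElement

section P5

/-- the affine group of the complex line -/
@[ext] structure Aff where
  a : ℂˣ
  b : ℂ

namespace Aff

instance : Mul Aff := ⟨fun x y => ⟨x.a * y.a, x.b + x.a * y.b⟩⟩
instance : One Aff := ⟨⟨1, 0⟩⟩
instance : Inv Aff := ⟨fun x => ⟨x.a⁻¹, - ((x.a⁻¹ : ℂˣ) * x.b)⟩⟩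

@[simp] theorem mul_a (x y : Aff) : (x * y).a = x.a * y.a := rfl
@[simp] theorem mul_b (x y : Aff) : (x * y).b = x.b + x.a * y.b := rfl
@[simp] theorem one_a : (1 : Aff).a = 1 := rfl
@[simp] theorem one_b : (1 : Aff).b = 0 := rfl
@[simp] theorem inv_a (x : Aff) : (x⁻¹).a = x.a⁻¹ := rfl
@[simp] theorem inv_b (x : Aff) : (x⁻¹).b = - ((x.a⁻¹ : ℂˣ) * x.b) := rfl

instance : Group Aff := Group.ofLeftAxioms
  (fun x y z => by ext <;> simp <;> ring) (fun x => by ext <;> simp)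
  (fun x => by ext <;> simp)

def aHom : Aff →* ℂˣ where
  toFun := Aff.a
  map_one' := rfl
  map_mul' _ _ := rfl

theorem pow_a (x : Aff) (m : ℕ) : (x ^ m).a = x.a ^ m := map_pow aHom x m

theorem commute_iff {x y : Aff} : Commute x y ↔ ((x.a : ℂ) - 1) * y.b = ((y.a : ℂ) - 1) * x.b := by
  rw [commute_iff_eq, Aff.ext_iff]
  simp only [mul_a, mul_b, mul_comm x.a y.a, true_and]
  constructor
  · intro h; linear_combination h
  · intro h; linear_combination h

theorem ne_one_b {x : Aff} (hx : x ≠ 1) (ha : x.a = 1) : x.b ≠ 0 := by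
  intro hb; exact hx (Aff.ext ha hb)

theorem ct {x y z : Aff} (hx : x ≠ 1) (h1 : Commute y x) (h2 : Commute z x) : Commute y z := by
  rw [commute_iff] at *
  by_cases ha : x.a = 1
  · have hb := ne_one_b hx ha
    simp only [ha, Units.val_one, sub_self, zero_mul] at h1 h2
    have e1 : (y.a : ℂ) - 1 = 0 := by simpa [hb] using h1
    have e2 : (z.a : ℂ) - 1 = 0 := by simpa [hb] using h2
    rw [e1, e2]; ring
  · have : (x.a : ℂ) - 1 ≠ 0 := by
      rw [sub_ne_zero]; exact fun h => ha (Units.ext h)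
    apply mul_left_cancel₀ this
    linear_combination (z.a - 1 : ℂ) * h1 - (y.a - 1 : ℂ) * h2

theorem trans_pow {x : Aff} (ha : x.a = 1) (m : ℕ) : (x ^ m).b = m * x.b := by
  induction m with
  | zero => simp
  | succ m ih => rw [pow_succ]; simp [pow_a, ha, ih]; ring

theorem trans_torsion {x : Aff} (ha : x.a = 1) {m : ℕ} (hm : 0 < m) (h : x ^ m = 1) : x = 1 := by
  have := trans_pow ha m
  rw [h] at this
  have hm' : (m : ℂ) ≠ 0 := by exact_mod_cast hm.ne'
  refine Aff.ext ha ?_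
  simpa [hm'] using this.symm

theorem nt {x h : Aff} {m : ℕ} (hm : 0 < m) (hx : x ^ m = 1) (hc : Commute x (h * x * h⁻¹)) :
    Commute h x := by
  by_cases ha : x.a = 1
  · rw [trans_torsion ha hm hx]; exact Commute.one_right _
  · have hn : (x.a : ℂ) - 1 ≠ 0 := by
      rw [sub_ne_zero]; exact fun h => ha (Units.ext h)
    rw [commute_iff] at hc ⊢
    have e : (h * x * h⁻¹).a = x.a := by simp
    rw [e] at hc
    have e2 := mul_left_cancel₀ hn hc
    simp only [mul_b, mul_a, inv_b, Units.val_mul] at e2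
    have e3 : (h.a : ℂ) * (h.a⁻¹ : ℂˣ) = 1 := by simp
    linear_combination e2 + x.a * h.b * e3

theorem t1 {x y : Aff} (hx : x.a = 1) (hy : y.a = 1) : Commute x y := by
  rw [commute_iff, hx, hy]; simp

theorem t2 {x y : Aff} (hx : x.a = 1) (hy : y.a ≠ 1) (h : Commute x y) : x = 1 := by
  have hn : (y.a : ℂ) - 1 ≠ 0 := by
      rw [sub_ne_zero]; exact fun h => hy (Units.ext h)
  rw [commute_iff, hx] at h
  refine Aff.ext hx ?_
  simpa [hn] using h.symm

end Aff

variable {ι : Type*} [DecidableEq ι]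

structure Good (N : Subgroup (MulAut (FreeGroup ι))) (f : MulAut (FreeGroup ι) → Aff) (k : ℕ) :
    Prop where
  normal : N.Normal
  ia : IAg ι ≤ N
  mul : ∀ x ∈ N, ∀ y ∈ N, f (x * y) = f x * f y
  kpos : 0 < k
  pow_mem : ∀ s, s ^ k ∈ N
  pow_a : ∀ s, (f (s ^ k)).a = 1

namespace Good

variable {N : Subgroup (MulAut (FreeGroup ι))} {f : MulAut (FreeGroup ι) → Aff} {k : ℕ}

theorem one (G : Good N f k) : f 1 = 1 := by
  have := G.mul 1 N.one_mem 1 N.one_mem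
  simpa using this

theorem inv (G : Good N f k) {x} (hx : x ∈ N) : f x⁻¹ = (f x)⁻¹ := by
  have := G.mul x hx x⁻¹ (inv_mem hx)
  rw [mul_inv_cancel, G.one] at this
  exact (inv_eq_of_mul_eq_one_right this.symm).symm

theorem pow (G : Good N f k) {x} (hx : x ∈ N) (m : ℕ) : f (x ^ m) = f x ^ m := by
  induction m with
  | zero => simp [G.one]
  | succ m ih => rw [pow_succ, G.mul _ (N.pow_mem hx m) _ hx, ih, pow_succ]

theorem conjf (G : Good N f k) {x y} (hx : x ∈ N) (hy : y ∈ N) :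
    f (x * y * x⁻¹) = f x * f y * (f x)⁻¹ := by
  rw [G.mul _ (mul_mem hx hy) _ (inv_mem hx), G.mul _ hx _ hy, G.inv hx]

theorem comm (G : Good N f k) {x y} (hx : x ∈ N) (hy : y ∈ N) (h : Commute x y) :
    Commute (f x) (f y) := by
  rw [commute_iff_eq, ← G.mul _ hx _ hy, ← G.mul _ hy _ hx, h.eq]

theorem conj_mem (G : Good N f k) (w : FreeGroup ι) : MulAut.conj w ∈ N := G.ia (conj_mem_IAg w)

theorem nconj (G : Good N f k) {x} (hx : x ∈ N) (s : MulAut (FreeGroup ι)) : s * x * s⁻¹ ∈ N :=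
  G.normal.conj_mem x hx s

theorem conj (G : Good N f k) (s : MulAut (FreeGroup ι)) : Good N (fun x => f (s * x * s⁻¹)) k where
  normal := G.normal
  ia := G.ia
  mul := fun x hx y hy => by
    rw [← conj_mul, G.mul _ (G.nconj hx s) _ (G.nconj hy s)]
  kpos := G.kpos
  pow_mem := G.pow_mem
  pow_a := fun x => by rw [← conj_pow]; exact G.pow_a _

theorem _root_.FA.ext_mem_IAg (i : ι) {ν : MulAut (B i)} (h : ν ∈ IAg {j : ι // j ≠ i}) :
    ext i ν ∈ IAg ι := by
  apply mem_IAg_of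
  intro j
  by_cases hj : j = i
  · subst hj; simp
  · rw [ext_of hj]
    have := congrArg (Abelianization.map (inc i)) (h (g' hj))
    simpa using this

theorem extg (G : Good N f k) (i : ι) : Good (N.comap (FA.ext i)) (fun x => f (FA.ext i x)) k where
  normal := by have := G.normal; infer_instance
  ia := fun x hx => G.ia (ext_mem_IAg i hx)
  mul := fun x hx y hy => by simp only [map_mul]; exact G.mul _ hx _ hy
  kpos := G.kpos
  pow_mem := fun s => by rw [Subgroup.mem_comap, map_pow]; exact G.pow_mem _
  pow_a := fun s => by simp only [map_pow]; exact G.pow_a _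

theorem conj_mul_f (G : Good N f k) (v w : FreeGroup ι) :
    f (MulAut.conj (v * w)) = f (MulAut.conj v) * f (MulAut.conj w) := by
  rw [map_mul, G.mul _ (G.conj_mem _) _ (G.conj_mem _)]

theorem comm_conj (G : Good N f k) {s : MulAut (FreeGroup ι)} (hs : s ∈ N) {w : FreeGroup ι}
    (h : s w = w) : Commute (f s) (f (MulAut.conj w)) := by
  apply G.comm hs (G.conj_mem _)
  have := conj_conj s w
  rw [h, mul_inv_eq_iff_eq_mul] at this
  exact this

theorem torsion_aux (G : Good N f k) {c p : ι} (hcp : c ≠ p)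
    (h : Commute (f (R hcp ^ k)) (f (MulAut.conj (of p)))) : f (MulAut.conj (of c)) ^ k = 1 := by
  have e := conj_conj (R hcp ^ k) (of p)
  have e2 : (R hcp ^ k) (of p) = of p * of c ^ k := by
    rw [R_pow, rho_same, map_pow, inc_g]
  rw [e2] at e
  have e3 := congrArg f e
  rw [G.conjf (G.pow_mem _) (G.conj_mem _), h.eq, mul_inv_cancel_right, G.conj_mul_f, map_pow,
    G.pow (G.conj_mem _)] at e3
  simpa using e3.symm

theorem torsion (G : Good N f k) (H3 : ∀ i j : ι, ∃ l, l ≠ i ∧ l ≠ j) (c : ι) :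
    f (MulAut.conj (of c)) ^ k = 1 := by
  obtain ⟨d, hdc, -⟩ := H3 c c
  obtain ⟨e, hec, hed⟩ := H3 c d
  by_cases ha : (f (MulAut.conj (of d))).a = 1
  · exact G.torsion_aux hdc.symm (Aff.t1 (G.pow_a _) ha)
  · apply G.torsion_aux hec.symm
    have : f (R hec.symm ^ k) = 1 := by
      apply Aff.t2 (G.pow_a _) ha
      apply G.comm_conj (G.pow_mem _)
      rw [R_pow, rho_ne hed.symm]
    rw [this]; exact Commute.one_left _

theorem comm_gen (G : Good N f k) (H3 : ∀ i j : ι, ∃ l, l ≠ i ∧ l ≠ j) (x y : ι) :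
    Commute (f (MulAut.conj (of x))) (f (MulAut.conj (of y))) := by
  by_cases hxy : x = y
  · subst hxy; exact Commute.refl _
  obtain ⟨z, hzx, hzy⟩ := H3 x y
  have hK : ∀ {i j : ι} (h : j ≠ i), K h ∈ N := fun h => G.ia (K_mem_IAg h)
  -- K_12 * conj
  have hk' : ∀ {i j : ι} (h : j ≠ i), (MulAut.conj (of j) * K h) (of i) = of i := by
    intro i j h; simp; group
  by_cases h3 : f (MulAut.conj (of z)) = 1
  · set s := R hzx.symm with hs
    have c1 : Commute (f (s * (MulAut.conj (of y) * K (Ne.symm hxy)) * s⁻¹))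
        (f (MulAut.conj (of x))) := by
      apply G.comm_conj (G.nconj (mul_mem (G.conj_mem _) (hK _)) s)
      have e : s⁻¹ (of x) = of x := by
        have : s (of x) = of x := R_ne _ hzx.symm
        exact s.symm_apply_eq.2 this.symm
      change s ((MulAut.conj (of y) * K (Ne.symm hxy)) (s⁻¹ (of x))) = _
      rw [e, hk', R_ne _ hzx.symm]
    have c2 : Commute (f (s * K (Ne.symm hxy) * s⁻¹)) (f (MulAut.conj (of x))) := by
      have e : f (MulAut.conj (of x)) = f (MulAut.conj (s (of z))) := by
        rw [hs, R_same, G.conj_mul_f, h3, one_mul]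
      rw [e]
      apply G.comm_conj (G.nconj (hK _) s)
      change s (K (Ne.symm hxy) (s⁻¹ (s (of z)))) = _
      have : s⁻¹ (s (of z)) = of z := s.symm_apply_apply _
      rw [this, K_ne _ hzx]
    have e : MulAut.conj (of y) = (s * (MulAut.conj (of y) * K (Ne.symm hxy)) * s⁻¹) *
        (s * K (Ne.symm hxy) * s⁻¹)⁻¹ := by
      have : MulAut.conj (of y) = s * MulAut.conj (of y) * s⁻¹ := by
        rw [conj_conj, hs, R_ne _ hzy.symm]
      conv_lhs => rw [this]
      group
    rw [e, G.mul _ (G.nconj (mul_mem (G.conj_mem _) (hK _)) s) _ (inv_mem (G.nconj (hK _) s)),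
      G.inv (G.nconj (hK _) s)]
    exact (c1.symm).mul_right c2.symm.inv_right
  · have key : ∀ x y : ι, y ≠ x → z ≠ x →
      Commute (f (MulAut.conj (of x))) (f (MulAut.conj (of y))) ∨
      Commute (f (MulAut.conj (of y))) (f (MulAut.conj (of z))) := by
      intro x y hyx hzx
      by_cases hK1 : f (K hyx) = 1
      · left
        have c := G.comm_conj (mul_mem (G.conj_mem _) (hK _)) (hk' hyx)
        rw [G.mul _ (G.conj_mem _) _ (hK _), hK1, mul_one] at c
        exact c.symm
      · right
        exact Aff.ct hK1 (G.comm_conj (hK _) (K_ne _ hyx)).symm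
          (G.comm_conj (hK _) (K_ne _ hzx)).symm
    rcases key x y (Ne.symm hxy) hzx with h | h
    · exact h
    rcases key y x hxy hzy with h' | h'
    · exact h'.symm
    exact Aff.ct h3 h' h

theorem comm_inn (G : Good N f k) (H3 : ∀ i j : ι, ∃ l, l ≠ i ∧ l ≠ j) (v w : FreeGroup ι) :
    Commute (f (MulAut.conj v)) (f (MulAut.conj w)) := by
  induction v using FreeGroup.induction_on with
  | C1 => rw [map_one, G.one]; exact Commute.one_left _
  | inv_of l h => rw [map_inv, G.inv (G.conj_mem _)]; exact h.inv_left
  | mul x y hx hy => rw [G.conj_mul_f]; exact hx.mul_left hy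
  | of l =>
    induction w using FreeGroup.induction_on with
    | C1 => rw [map_one, G.one]; exact Commute.one_right _
    | inv_of l h => rw [map_inv, G.inv (G.conj_mem _)]; exact h.inv_right
    | mul x y hx hy => rw [G.conj_mul_f]; exact hx.mul_right hy
    | of j => exact G.comm_gen H3 l j

theorem comm_all (G : Good N f k) (H3 : ∀ i j : ι, ∃ l, l ≠ i ∧ l ≠ j) {h : MulAut (FreeGroup ι)}
    (hh : h ∈ N) (w : FreeGroup ι) : Commute (f h) (f (MulAut.conj w)) := by
  induction w using FreeGroup.induction_on with
  | C1 => rw [map_one, G.one]; exact Commute.one_right _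
  | inv_of l h => rw [map_inv, G.inv (G.conj_mem _)]; exact h.inv_right
  | mul x y hx hy => rw [G.conj_mul_f]; exact hx.mul_right hy
  | of j =>
    apply Aff.nt G.kpos (G.torsion H3 j)
    rw [← G.conjf hh (G.conj_mem _), conj_conj]
    exact G.comm_inn H3 _ _

end Good
end P5
end FA

namespace FA

set_option linter.unusedSectionVars false
open FreeGroup (of)
open commutatorElement

section P6

variable {ι : Type*} [DecidableEq ι]

theorem H3sub (H4 : ∀ i j l : ι, ∃ m, m ≠ i ∧ m ≠ j ∧ m ≠ l) (i : ι) (p q : {j : ι // j ≠ i}) :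
    ∃ l : {j : ι // j ≠ i}, l ≠ p ∧ l ≠ q := by
  obtain ⟨m, h1, h2, h3⟩ := H4 i p.1 q.1
  exact ⟨⟨m, h1⟩, fun h => h2 (congrArg Subtype.val h), fun h => h3 (congrArg Subtype.val h)⟩

theorem lam_mem_IAg (i : ι) {w : B i} (hw : w ∈ commutator (B i)) : lam i w ∈ IAg ι := by
  have : lam i w = dl i w * (rho i w)⁻¹ := by rw [dl_eq_mul]; group
  rw [this]; exact mul_mem (dl_mem_IAg _ _) (inv_mem (rho_mem_IAg i hw))

theorem MM_le_IAg : MM ι ≤ IAg ι := by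
  refine (Subgroup.closure_le _).2 ?_
  rintro _ ⟨i, w, rfl | ⟨hw, rfl⟩⟩
  · exact dl_mem_IAg _ _
  · exact rho_mem_IAg _ hw

namespace Good

variable {N : Subgroup (MulAut (FreeGroup ι))} {f : MulAut (FreeGroup ι) → Aff} {k : ℕ}

theorem f_ext_conj (G : Good N f k) (hI : ∀ w, f (MulAut.conj w) = 1) (i : ι) (w : B i) :
    f (FA.ext i (MulAut.conj w)) = f (dl i w) := by
  rw [ext_conj, G.mul _ (G.conj_mem _) _ (G.ia (dl_mem_IAg _ _)), hI, one_mul]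

theorem dl_comm (G : Good N f k) (hI : ∀ w, f (MulAut.conj w) = 1)
    (H4 : ∀ i j l : ι, ∃ m, m ≠ i ∧ m ≠ j ∧ m ≠ l) (i : ι) (v w : B i) :
    Commute (f (dl i v)) (f (dl i w)) := by
  have := (G.extg i).comm_inn (H3sub H4 i) v w
  simpa only [G.f_ext_conj hI] using this

theorem dl_comm_ext (G : Good N f k) (hI : ∀ w, f (MulAut.conj w) = 1)
    (H4 : ∀ i j l : ι, ∃ m, m ≠ i ∧ m ≠ j ∧ m ≠ l) (i : ι) {ν : MulAut (B i)} (hν : FA.ext i ν ∈ N)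
    (w : B i) : Commute (f (FA.ext i ν)) (f (dl i w)) := by
  have := (G.extg i).comm_all (H3sub H4 i) (h := ν) hν w
  simpa only [G.f_ext_conj hI] using this

theorem dl_torsion (G : Good N f k) (hI : ∀ w, f (MulAut.conj w) = 1)
    (H4 : ∀ i j l : ι, ∃ m, m ≠ i ∧ m ≠ j ∧ m ≠ l) {i j : ι} (h : j ≠ i) :
    f (K h) ^ k = 1 := by
  have := (G.extg i).torsion (H3sub H4 i) ⟨j, h⟩
  simp only [G.f_ext_conj hI] at this
  exact this

theorem dl_commutator (G : Good N f k) (hI : ∀ w, f (MulAut.conj w) = 1)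
    (H4 : ∀ i j l : ι, ∃ m, m ≠ i ∧ m ≠ j ∧ m ≠ l) (i : ι) {c : B i} (hc : c ∈ commutator (B i)) :
    f (dl i c) = 1 := by
  have hd : ∀ w, dl i w ∈ N := fun w => G.ia (dl_mem_IAg _ _)
  have hm : ∀ v w, f (dl i (v * w)) = f (dl i v) * f (dl i w) := fun v w => by
    rw [map_mul, G.mul _ (hd _) _ (hd _)]
  have hi : ∀ v, f (dl i v⁻¹) = (f (dl i v))⁻¹ := fun v => by
    rw [map_inv, G.inv (hd _)]
  rw [commutator_eq_closure] at hc
  induction hc using Subgroup.closure_induction with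
  | mem x hx =>
    obtain ⟨u, v, rfl⟩ := hx
    rw [commutatorElement_def, hm, hm, hm, hi, hi, (G.dl_comm hI H4 i u v).eq]
    group
  | one => rw [map_one, G.one]
  | mul x y _ _ hx hy => rw [hm, hx, hy, one_mul]
  | inv x _ hx => rw [hi, hx, inv_one]

theorem rho_inv_conj (G : Good N f k) (hI : ∀ w, f (MulAut.conj w) = 1)
    (H4 : ∀ i j l : ι, ∃ m, m ≠ i ∧ m ≠ j ∧ m ≠ l) (i : ι) {c : B i} (hc : c ∈ commutator (B i))
    (b : B i) : f (rho i (b * c * b⁻¹)) = f (rho i c) := by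
  have key : ∀ b, f (lam i c) * f (rho i (b * c * b⁻¹)) = 1 := by
    intro b
    have := (G.conj (rho i b)).dl_commutator (fun w => by rw [conj_conj]; exact hI _) H4 i hc
    have e : rho i b * dl i c * (rho i b)⁻¹ = lam i c * rho i (b * c * b⁻¹) := by
      rw [dl_eq_mul, ← mul_assoc (rho i b), ← lam_rho_comm, map_mul, map_mul, map_inv]
      group
    rw [e, G.mul _ (G.ia (lam_mem_IAg i hc)) _
      (G.ia (rho_mem_IAg i (Subgroup.Normal.conj_mem inferInstance _ hc _)))] at this
    exact this
  have h1 := key 1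
  have h2 := key b
  rw [one_mul, inv_one, mul_one] at h1
  exact mul_left_cancel (h2.trans h1.symm)

theorem rho_IA_inv (G : Good N f k) (hI : ∀ w, f (MulAut.conj w) = 1)
    (H4 : ∀ i j l : ι, ∃ m, m ≠ i ∧ m ≠ j ∧ m ≠ l) (i : ι) {c : B i} (hc : c ∈ commutator (B i))
    {ν : MulAut (B i)} (hν : ν ∈ IAg {j : ι // j ≠ i}) : f (rho i (ν c)) = f (rho i c) := by
  have hcc : ∀ x y : B i, ⁅x, y⁆ ∈ commutator (B i) := fun x y =>
      Subgroup.commutator_mem_commutator (Subgroup.mem_top _) (Subgroup.mem_top _)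
  have hm : ∀ v ∈ commutator (B i), ∀ w ∈ commutator (B i),
    f (rho i (v * w)) = f (rho i v) * f (rho i w) := fun v hv w hw => by
      rw [map_mul, G.mul _ (G.ia (rho_mem_IAg i hv)) _ (G.ia (rho_mem_IAg i hw))]
  have hi : ∀ v ∈ commutator (B i), f (rho i v⁻¹) = (f (rho i v))⁻¹ := fun v hv => by
    rw [map_inv, G.inv (G.ia (rho_mem_IAg i hv))]
  have hconj : ∀ (b : B i), ∀ c ∈ commutator (B i), b * c * b⁻¹ ∈ commutator (B i) :=
    fun b c hc => Subgroup.Normal.conj_mem inferInstance _ hc _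
  have hz1 : ∀ z ∈ commutator (B i), ∀ y, f (rho i ⁅z, y⁆) = 1 := by
    intro z hz y
    rw [commutatorElement_def, mul_assoc z, mul_assoc z, hm _ hz _ (hconj y _ (inv_mem hz)),
      G.rho_inv_conj hI H4 i (inv_mem hz), hi _ hz, mul_inv_cancel]
  have hl : ∀ z ∈ commutator (B i), ∀ x y : B i, f (rho i ⁅x * z, y⁆) = f (rho i ⁅x, y⁆) := by
    intro z hz x y
    have e : ⁅x * z, y⁆ = (x * ⁅z, y⁆ * x⁻¹) * ⁅x, y⁆ := by
      simp only [commutatorElement_def]; group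
    rw [e, hm _ (hconj _ _ (hcc _ _)) _ (hcc _ _), G.rho_inv_conj hI H4 i (hcc _ _), hz1 z hz,
      one_mul]
  have hr : ∀ z ∈ commutator (B i), ∀ x y : B i, f (rho i ⁅x, y * z⁆) = f (rho i ⁅x, y⁆) := by
    intro z hz x y
    rw [← commutatorElement_inv, hi _ (hcc _ _), hl z hz, ← hi _ (hcc _ _), commutatorElement_inv]
  have hν' : ∀ x, ∃ z ∈ commutator (B i), ν x = x * z := by
    intro x
    refine ⟨x⁻¹ * ν x, ?_, by group⟩
    have := hν x
    exact QuotientGroup.eq.1 this.symm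
  have hc0 := hc
  rw [commutator_eq_closure] at hc
  have hmem : ∀ x, x ∈ Subgroup.closure (commutatorSet (B i)) → x ∈ commutator (B i) := by
    intro x hx; rw [commutator_eq_closure]; exact hx
  have hνm : ∀ x, x ∈ Subgroup.closure (commutatorSet (B i)) → ν x ∈ commutator (B i) := by
    intro x hx; exact map_commutator_mem ν.toMonoidHom (hmem x hx)
  clear hc0
  induction hc using Subgroup.closure_induction with
  | mem x hx =>
    obtain ⟨u, v, rfl⟩ := hx
    obtain ⟨z1, hz1, e1⟩ := hν' u
    obtain ⟨z2, hz2, e2⟩ := hν' v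
    rw [map_commutatorElement, e1, e2, hl _ hz1, hr _ hz2]
  | one => rw [map_one]
  | mul x y hx' hy' hx hy =>
    rw [map_mul, hm _ (hνm _ hx') _ (hνm _ hy'), hx, hy, hm _ (hmem _ hx') _ (hmem _ hy')]
  | inv x hx' hx => rw [map_inv, hi _ (hνm _ hx'), hx, hi _ (hmem _ hx')]

/-- the elements of `MM` commute with the image of `K` -/
theorem MM_comm (G : Good N f k) (hI : ∀ w, f (MulAut.conj w) = 1)
    (H4 : ∀ i j l : ι, ∃ m, m ≠ i ∧ m ≠ j ∧ m ≠ l) {a b c : ι} (hb : b ≠ a) (hc : c ≠ a)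
    (hbc : b ≠ c) (hKb : f (K hb) ≠ 1) (hKc : f (K hc) ≠ 1) {m : MulAut (FreeGroup ι)}
    (hm : m ∈ MM ι) : Commute (f m) (f (K hb)) := by
  have hMN : ∀ m ∈ MM ι, m ∈ N := fun m hm => G.ia (MM_le_IAg hm)
  have hex : ∀ i, i ≠ a → ∃ (l : ι) (hl : l ≠ a), l ≠ i ∧ f (K hl) ≠ 1 := by
    intro i hi
    by_cases hib : b = i
    · exact ⟨c, hc, by rw [← hib]; exact hbc.symm, hKc⟩
    · exact ⟨b, hb, hib, hKb⟩
  have hfin : ∀ {l} (hl : l ≠ a), f (K hl) ≠ 1 → ∀ x, Commute x (f (K hl)) →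
      Commute x (f (K hb)) := fun hl h x hx => Aff.ct h hx (G.dl_comm hI H4 a _ _)
  unfold MM at hm
  induction hm using Subgroup.closure_induction with
  | mem x hx =>
    obtain ⟨i, w, rfl | ⟨hw, rfl⟩⟩ := hx
    · by_cases hi : i = a
      · subst hi; exact G.dl_comm hI H4 _ _ _
      · obtain ⟨l, hl, hli, hlK⟩ := hex i hi
        apply hfin hl hlK
        have e := ext_K (Ne.symm hi) hli hl
        rw [← e]
        refine (G.dl_comm_ext hI H4 i ?_ w).symm
        rw [e]; exact G.ia (K_mem_IAg _)
    · have hwN := G.ia (rho_mem_IAg i hw)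
      by_cases hi : i = a
      · subst hi
        have e := dl_rho i (g' hb) w
        have e2 := congrArg f e
        rw [G.conjf (G.ia (dl_mem_IAg _ _)) hwN, G.rho_inv_conj hI H4 _ hw,
          mul_inv_eq_iff_eq_mul] at e2
        exact e2.symm
      · obtain ⟨l, hl, hli, hlK⟩ := hex i hi
        apply hfin hl hlK
        have e := ext_K (Ne.symm hi) hli hl
        have e2 := congrArg f (ext_rho i (K (i := (⟨a, Ne.symm hi⟩ : {x // x ≠ i})) (j := ⟨l, hli⟩)
          (by simpa using hl)) w)
        rw [e, G.rho_IA_inv hI H4 i hw (K_mem_IAg _), G.conjf (G.ia (K_mem_IAg _)) hwN,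
          mul_inv_eq_iff_eq_mul] at e2
        exact e2.symm
  | one => rw [G.one]; exact Commute.one_left _
  | mul x y hx' hy' hx hy =>
    rw [G.mul _ (hMN _ hx') _ (hMN _ hy')]; exact hx.mul_left hy
  | inv x hx' hx => rw [G.inv (hMN _ hx')]; exact hx.inv_left

theorem comm_a (G : Good N f k) {u} (hu : u ∈ ⁅N, N⁆) : u ∈ N ∧ (f u).a = 1 := by
  have := G.normal
  refine ⟨Subgroup.commutator_le_left _ _ hu, ?_⟩
  rw [Subgroup.commutator_def] at hu
  have hle : ∀ x, x ∈ Subgroup.closure {g | ∃ g₁ ∈ N, ∃ g₂ ∈ N, ⁅g₁, g₂⁆ = g} → x ∈ N := by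
    intro x hx
    rw [← Subgroup.commutator_def] at hx
    exact Subgroup.commutator_le_left _ _ hx
  induction hu using Subgroup.closure_induction with
  | mem x hx =>
    obtain ⟨g, hg, h, hh, rfl⟩ := hx
    rw [commutatorElement_def, G.mul _ (mul_mem (mul_mem hg hh) (inv_mem hg)) _ (inv_mem hh),
      G.conjf hg hh, G.inv hh]
    simp
  | one => rw [G.one]; rfl
  | mul x y hx' hy' hx hy => rw [G.mul _ (hle _ hx') _ (hle _ hy')]; simp [hx, hy]
  | inv x hx' hx => rw [G.inv (hle _ hx')]; simp [hx]

theorem comm_kill (G : Good N f k) {M : Subgroup (MulAut (FreeGroup ι))} (hM : M ≤ N)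
    (h : ∀ x ∈ M, ∀ y ∈ M, Commute (f x) (f y)) {u} (hu : u ∈ ⁅M, M⁆) : f u = 1 := by
  have hle' : ⁅M, M⁆ ≤ N := by
    rw [Subgroup.commutator_le]
    intro x hx y hy
    rw [commutatorElement_def]
    exact mul_mem (mul_mem (mul_mem (hM hx) (hM hy)) (inv_mem (hM hx))) (inv_mem (hM hy))
  rw [Subgroup.commutator_def] at hu hle'
  have hle : ∀ x, x ∈ Subgroup.closure {g | ∃ g₁ ∈ M, ∃ g₂ ∈ M, ⁅g₁, g₂⁆ = g} → x ∈ N :=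
    fun x hx => hle' hx
  induction hu using Subgroup.closure_induction with
  | mem x hx =>
    obtain ⟨x, hx, y, hy, rfl⟩ := hx
    rw [commutatorElement_def, G.mul _ (mul_mem (mul_mem (hM hx) (hM hy)) (inv_mem (hM hx))) _
      (inv_mem (hM hy)), G.conjf (hM hx) (hM hy), G.inv (hM hy), (h x hx y hy).eq]
    group
  | one => rw [G.one]
  | mul x y hx' hy' hx hy => rw [G.mul _ (hle _ hx') _ (hle _ hy'), hx, hy, one_mul]
  | inv x hx' hx => rw [G.inv (hle _ hx'), hx, inv_one]

theorem final1 [Fintype ι] (G : Good N f k) (hI : ∀ w, f (MulAut.conj w) = 1)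
    (H4 : ∀ i j l : ι, ∃ m, m ≠ i ∧ m ≠ j ∧ m ≠ l) {a b c : ι} (hb : b ≠ a) (hc : c ≠ a)
    (hbc : b ≠ c) (hKb : f (K hb) ≠ 1) (hKc : f (K hc) ≠ 1) {u : MulAut (FreeGroup ι)}
    (hu : u ∈ ⁅N, N⁆) : f u = 1 := by
  obtain ⟨huN, hua⟩ := G.comm_a hu
  have htor := G.dl_torsion hI H4 hb
  have hga : (f (K hb)).a ≠ 1 := fun h => hKb (Aff.trans_torsion h G.kpos htor)
  obtain ⟨r, hr, -, hrE⟩ := Subgroup.exists_pow_mem_of_index_ne_zero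
    (E_finiteIndex (ι := ι)).index_ne_zero u
  have hcom : Commute (f (u ^ r)) (f (K hb)) := by
    apply Aff.nt G.kpos htor
    rw [← G.conjf (N.pow_mem huN r) (G.ia (K_mem_IAg _))]
    exact (G.MM_comm hI H4 hb hc hbc hKb hKc (MM_norm hrE (K_mem_MM _))).symm
  rw [G.pow huN] at hcom
  have : f u ^ r = 1 := Aff.t2 (by rw [Aff.pow_a, hua, one_pow]) hga hcom
  exact Aff.trans_torsion hua hr this

theorem final2 [Fintype ι] (G : Good N f k)
    (H4 : ∀ i j l : ι, ∃ m, m ≠ i ∧ m ≠ j ∧ m ≠ l) {a b : ι} (hb : b ≠ a)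
    (hKb : f (K hb) ≠ 1) {u : MulAut (FreeGroup ι)}
    (hu : u ∈ ⁅N, N⁆) : f u = 1 := by
  have H3 : ∀ i j : ι, ∃ l, l ≠ i ∧ l ≠ j := fun i j => by
    obtain ⟨m, h1, h2, -⟩ := H4 i j j; exact ⟨m, h1, h2⟩
  by_cases hI : ∀ w, f (MulAut.conj w) = 1
  · obtain ⟨c, hca, hcb, -⟩ := H4 a b b
    by_cases hKc : f (K hca) = 1
    · set s := R hcb.symm with hs
      have e1 : s * K hca * s⁻¹ = K hca * K hb := by
        have := R_pow_conj_dl hca.symm hcb hb.symm 1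
        simpa only [pow_one] using this
      have e2 : s * K hb * s⁻¹ = K hb := by
        have := ext_R hca hb hcb.symm
        rw [hs, ← this, K, ext_dl, g', R_ne]
        simpa using hcb.symm
      have G' := G.conj s
      have hu' : s⁻¹ * u * s ∈ ⁅N, N⁆ := by
        have := G.normal
        have := Subgroup.Normal.conj_mem (inferInstance : ⁅N, N⁆.Normal) u hu s⁻¹
        simpa using this
      have := G'.final1 (fun w => by rw [conj_conj]; exact hI _) H4 hb hca hcb.symm
        (by rw [e2]; exact hKb)
        (by rw [e1, G.mul _ (G.ia (K_mem_IAg _)) _ (G.ia (K_mem_IAg _)), hKc, one_mul]; exact hKb)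
        hu'
      simpa [mul_assoc] using this
    · exact G.final1 hI H4 hb hca hcb.symm hKb hKc hu
  · push Not at hI
    obtain ⟨w, hw⟩ := hI
    exact G.comm_kill le_rfl (fun x hx y hy => Aff.ct hw (G.comm_all H3 hx w) (G.comm_all H3 hy w)) hu

theorem DD_kill (G : Good N f k) (h : ∀ (s : MulAut (FreeGroup ι)) {a b : ι} (hb : b ≠ a),
    f (s * K hb * s⁻¹) = 1) {d} (hd : d ∈ DD ι) : f d = 1 := by
  have hN : ∀ x ∈ DD ι, x ∈ N := fun x hx => G.ia (DD_le_IAg hx)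
  unfold DD Subgroup.normalClosure at hd hN
  induction hd using Subgroup.closure_induction with
  | mem x hx =>
    rw [Group.mem_conjugatesOfSet_iff] at hx
    obtain ⟨y, ⟨i, j, hij, rfl⟩, hx⟩ := hx
    obtain ⟨s, rfl⟩ := isConj_iff.1 hx
    exact h s hij
  | one => rw [G.one]
  | mul x y hx' hy' hx hy => rw [G.mul _ (hN _ hx') _ (hN _ hy'), hx, hy, one_mul]
  | inv x hx' hx => rw [G.inv (hN _ hx'), hx, inv_one]

theorem final3 [Fintype ι] (G : Good N f k)
    (H4 : ∀ i j l : ι, ∃ m, m ≠ i ∧ m ≠ j ∧ m ≠ l)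
    (hfi : (⁅⁅N, N⁆, ⁅N, N⁆⁆ ⊔ DD ι).FiniteIndex) {u : MulAut (FreeGroup ι)}
    (hu : u ∈ ⁅N, N⁆) : f u = 1 := by
  have := G.normal
  by_cases h : ∀ (s : MulAut (FreeGroup ι)) (a b : ι) (hb : b ≠ a), f (s * K hb * s⁻¹) = 1
  · obtain ⟨huN, hua⟩ := G.comm_a hu
    obtain ⟨r, hr, -, hrE⟩ := Subgroup.exists_pow_mem_of_index_ne_zero hfi.index_ne_zero u
    have hle : ⁅N, N⁆ ≤ N := Subgroup.commutator_le_left _ _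
    obtain ⟨x, hx, y, hy, hxy⟩ := Subgroup.mem_sup_of_normal_right.1 hrE
    have hx1 : f x = 1 := G.comm_kill hle
      (fun x hx y hy => Aff.t1 (G.comm_a hx).2 (G.comm_a hy).2) hx
    have hy1 : f y = 1 := G.DD_kill (fun s _ _ hb => h s _ _ hb) hy
    have hxN : x ∈ N := hle (Subgroup.commutator_le_left _ _ hx)
    have : f u ^ r = 1 := by
      rw [← G.pow huN, ← hxy, G.mul _ hxN _ (G.ia (DD_le_IAg hy)), hx1, hy1, one_mul]
    exact Aff.trans_torsion hua hr this
  · push Not at h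
    obtain ⟨s, a, b, hb, hne⟩ := h
    have hu' : s⁻¹ * u * s ∈ ⁅N, N⁆ := by
      have := Subgroup.Normal.conj_mem (inferInstance : ⁅N, N⁆.Normal) u hu s⁻¹
      simpa using this
    have := (G.conj s).final2 H4 hb hne hu'
    simpa [mul_assoc] using this

end Good
end P6
end FA

namespace FA

set_option linter.unusedSectionVars false
open FreeGroup (of)
open commutatorElement

section P7

theorem exists_hom_int {A : Type*} [CommGroup A] [Group.FG A] (x : A) (hx : ∀ k : ℕ, 0 < k → x ^ k ≠ 1) :
    ∃ φ : A →* Multiplicative ℤ, φ x ≠ 1 := by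
  have hfg : Module.Finite ℤ (Additive A) := by
    rw [Module.Finite.iff_addGroup_fg]; infer_instance
  let T := Submodule.torsion ℤ (Additive A)
  have hfree : Module.Free ℤ (Additive A ⧸ T) := inferInstance
  have hne : T.mkQ (Additive.ofMul x) ≠ 0 := by
    intro h
    rw [Submodule.mkQ_apply, Submodule.Quotient.mk_eq_zero] at h
    obtain ⟨a, ha⟩ := (Submodule.mem_torsion_iff _).1 h
    have ha0 : (a : ℤ) ≠ 0 := nonZeroDivisors.coe_ne_zero a
    have ha' : x ^ (a : ℤ) = 1 := by
      have : Additive.ofMul (x ^ (a : ℤ)) = 0 := ha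
      exact this
    refine hx (a : ℤ).natAbs (Int.natAbs_pos.2 ha0) ?_
    rcases Int.natAbs_eq (a : ℤ) with h | h
    · rw [h] at ha'; simpa using ha'
    · rw [h] at ha'; simpa using ha'
  let bs := Module.Free.chooseBasis ℤ (Additive A ⧸ T)
  have : ∃ i, bs.repr (T.mkQ (Additive.ofMul x)) i ≠ 0 := by
    by_contra hcon
    push Not at hcon
    apply hne
    apply bs.repr.injective
    ext i; simpa using hcon i
  obtain ⟨i, hi⟩ := this
  refine ⟨AddMonoidHom.toMultiplicativeRight ((bs.coord i).comp T.mkQ).toAddMonoidHom, ?_⟩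
  intro h
  exact hi h

theorem hom_zero {Γ : Type*} [Group Γ] [Finite (Abelianization Γ)] (θ : Γ → ℂ)
    (h : ∀ x y, θ (x * y) = θ x + θ y) (g : Γ) : θ g = 0 := by
  let Θ : Γ →* Multiplicative ℂ :=
    { toFun := fun x => Multiplicative.ofAdd (θ x)
      map_one' := by
        have := h 1 1
        rw [one_mul] at this
        have h0 : θ 1 = 0 := by simpa using this
        rw [h0]; rfl
      map_mul' := fun x y => by rw [h]; rfl }
  have e : Θ g ^ Nat.card (Abelianization Γ) = 1 := by
    have : Θ g = Abelianization.lift Θ (Abelianization.of g) := by simp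
    rw [this, ← map_pow, pow_card_eq_one', map_one]
  have e2 : (Nat.card (Abelianization Γ) : ℂ) * θ g = 0 := by
    have : (Nat.card (Abelianization Γ)) • θ g = 0 := e
    simpa using this
  have : (Nat.card (Abelianization Γ) : ℂ) ≠ 0 := by exact_mod_cast Nat.card_pos.ne'
  simpa [this] using e2

theorem comm_mem' {Γ : Type*} [Group Γ] (x y : Γ) : ⁅x, y⁆ ∈ commutator Γ :=
  Subgroup.commutator_mem_commutator (Subgroup.mem_top _) (Subgroup.mem_top _)

/-- from an equivariant character to an affine representation -/
theorem aff_of_equivariant {Γ : Type*} [Group Γ] [Finite (Abelianization Γ)] (φ : Γ → ℂ)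
    (hφ : ∀ u ∈ commutator Γ, ∀ v ∈ commutator Γ, φ (u * v) = φ u + φ v)
    (χ : Γ →* ℂˣ) (hχ : ∀ g, ∀ u ∈ commutator Γ, φ (g * u * g⁻¹) = χ g * φ u)
    (u₀ : Γ) (hu₀ : u₀ ∈ commutator Γ) (hne : φ u₀ ≠ 0) :
    ∃ F : Γ →* Aff, F u₀ ≠ 1 := by
  have h1 : φ 1 = 0 := by
    have := hφ 1 (one_mem _) 1 (one_mem _)
    simpa using this
  have hinv : ∀ u ∈ commutator Γ, φ u⁻¹ = - φ u := by
    intro u hu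
    have := hφ u hu u⁻¹ (inv_mem hu)
    rw [mul_inv_cancel, h1] at this
    linear_combination -this
  have hN : ∀ g : Γ, ∀ u ∈ commutator Γ, g * u * g⁻¹ ∈ commutator Γ := fun g u hu =>
    Subgroup.Normal.conj_mem inferInstance u hu g
  have coc : ∀ g h g0 : Γ, φ ⁅g * h, g0⁆ = φ ⁅g, g0⁆ + χ g * φ ⁅h, g0⁆ := by
    intro g h g0
    have e : ⁅g * h, g0⁆ = (g * ⁅h, g0⁆ * g⁻¹) * ⁅g, g0⁆ := by
      simp only [commutatorElement_def]; group
    rw [e, hφ _ (hN _ _ (comm_mem' _ _)) _ (comm_mem' _ _), hχ _ _ (comm_mem' _ _), add_comm]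
  by_cases hχ1 : ∀ g, χ g = 1
  · exfalso
    apply hne
    have hz : ∀ g h : Γ, φ ⁅g, h⁆ = 0 := by
      intro g h
      apply hom_zero (fun g => φ ⁅g, h⁆)
      intro x y
      simp only [coc, hχ1, Units.val_one, one_mul]
    rw [commutator_eq_closure] at hu₀
    have hm : ∀ x ∈ Subgroup.closure (commutatorSet Γ), x ∈ commutator Γ := by
      intro x hx; rw [commutator_eq_closure]; exact hx
    clear hne
    induction hu₀ using Subgroup.closure_induction with
    | mem x hx => obtain ⟨u, v, rfl⟩ := hx; exact hz u v
    | one => exact h1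
    | mul x y hx' hy' hx hy => rw [hφ _ (hm _ hx') _ (hm _ hy'), hx, hy, add_zero]
    | inv x hx' hx => rw [hinv _ (hm _ hx'), hx, neg_zero]
  · push Not at hχ1
    obtain ⟨g0, hg0⟩ := hχ1
    refine ⟨MonoidHom.mk' (fun g => ⟨χ g, φ ⁅g, g0⁆⟩) ?_, ?_⟩
    · intro g h
      ext
      · simp
      · simp [coc]
    · intro h
      have hb : φ ⁅u₀, g0⁆ = 0 := congrArg Aff.b h
      have e : ⁅u₀, g0⁆ = u₀ * (g0 * u₀⁻¹ * g0⁻¹) := by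
        simp only [commutatorElement_def]; group
      rw [e, hφ _ hu₀ _ (hN _ _ (inv_mem hu₀)), hχ _ _ (inv_mem hu₀), hinv _ hu₀] at hb
      have hb2 : (1 - (χ g0 : ℂ)) * φ u₀ = 0 := by linear_combination hb
      rcases mul_eq_zero.1 hb2 with h | h
      · exact hg0 (Units.ext (sub_eq_zero.1 h).symm)
      · exact hne h

theorem aff_exists {Γ : Type*} [Group Γ] [Finite (Abelianization Γ)] (φ : Γ → ℂ)
    (hφ : ∀ u ∈ commutator Γ, ∀ v ∈ commutator Γ, φ (u * v) = φ u + φ v)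
    (u₀ : Γ) (hu₀ : u₀ ∈ commutator Γ) (hne : φ u₀ ≠ 0) :
    ∃ F : Γ →* Aff, F u₀ ≠ 1 := by
  classical
  let Q := Additive (Abelianization Γ)
  have : Fintype Q := Fintype.ofFinite _
  have h1 : φ 1 = 0 := by
    have := hφ 1 (one_mem _) 1 (one_mem _)
    simpa using this
  have hinv : ∀ u ∈ commutator Γ, φ u⁻¹ = - φ u := by
    intro u hu
    have := hφ u hu u⁻¹ (inv_mem hu)
    rw [mul_inv_cancel, h1] at this
    linear_combination -this
  have hN : ∀ g : Γ, ∀ u ∈ commutator Γ, g⁻¹ * u * g ∈ commutator Γ := fun g u hu => by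
    have := Subgroup.Normal.conj_mem (inferInstance : (commutator Γ).Normal) u hu g⁻¹
    simpa using this
  have hsurj : ∀ q : Q, ∃ g : Γ, Additive.ofMul (Abelianization.of g) = q := fun q =>
    QuotientGroup.mk_surjective (s := commutator Γ) q.toMul
  choose σ hσ using hsurj
  have hwd : ∀ (g h : Γ), Abelianization.of g = Abelianization.of h → ∀ u ∈ commutator Γ,
      φ (g⁻¹ * u * g) = φ (h⁻¹ * u * h) := by
    intro g h hgh u hu
    have hc : g⁻¹ * h ∈ commutator Γ := QuotientGroup.eq.1 hgh
    have e : h⁻¹ * u * h = (g⁻¹ * h)⁻¹ * (g⁻¹ * u * g) * (g⁻¹ * h) := by group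
    rw [e, hφ _ (mul_mem (inv_mem hc) (hN _ _ hu)) _ hc, hφ _ (inv_mem hc) _ (hN _ _ hu), hinv _ hc]
    ring
  let Φ : AddChar Q ℂ → Γ → ℂ := fun ψ u => ∑ q : Q, ψ (-q) * φ ((σ q)⁻¹ * u * σ q)
  have hsum : ∑ ψ : AddChar Q ℂ, Φ ψ u₀ = Fintype.card Q * φ u₀ := by
    simp only [Φ]
    rw [Finset.sum_comm]
    simp_rw [← Finset.sum_mul, AddChar.sum_apply_eq_ite]
    rw [Finset.sum_eq_single 0]
    · simp only [neg_zero, if_true]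
      congr 1
      have := hwd (σ 0) 1 (by rw [map_one]; exact hσ 0) u₀ hu₀
      simpa using this
    · intro b _ hb; simp [hb]
    · simp
  have hex : ∃ ψ, Φ ψ u₀ ≠ 0 := by
    by_contra hcon
    push Not at hcon
    rw [Finset.sum_eq_zero (fun ψ _ => hcon ψ)] at hsum
    have : (Fintype.card Q : ℂ) ≠ 0 := by exact_mod_cast Fintype.card_ne_zero
    exact (mul_ne_zero this hne) hsum.symm
  obtain ⟨ψ, hψ⟩ := hex
  let χ0 : Γ →* ℂ :=
    { toFun := fun g => ψ (- Additive.ofMul (Abelianization.of g))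
      map_one' := by simp
      map_mul' := fun x y => by
        rw [map_mul, ofMul_mul, neg_add, AddChar.map_add_eq_mul] }
  refine aff_of_equivariant (Φ ψ) ?_ χ0.toHomUnits ?_ u₀ hu₀ hψ
  · intro u hu v hv
    simp only [Φ]
    rw [← Finset.sum_add_distrib]
    refine Finset.sum_congr rfl fun q _ => ?_
    rw [← mul_add, ← hφ _ (hN _ _ hu) _ (hN _ _ hv)]
    congr 2
    group
  · intro g u hu
    simp only [Φ]
    rw [MonoidHom.coe_toHomUnits, Finset.mul_sum]
    let t : Q := Additive.ofMul (Abelianization.of g)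
    rw [← Equiv.sum_comp (Equiv.addLeft t)]
    refine Finset.sum_congr rfl fun q _ => ?_
    simp only [Equiv.coe_addLeft]
    have e1 : ψ (-(t + q)) = χ0 g * ψ (-q) := by
      rw [neg_add, AddChar.map_add_eq_mul]; rfl
    rw [e1, mul_assoc]
    congr 2
    have e2 : (σ (t + q))⁻¹ * (g * u * g⁻¹) * σ (t + q) =
      (g⁻¹ * σ (t + q))⁻¹ * u * (g⁻¹ * σ (t + q)) := by group
    rw [e2]
    apply hwd _ _ _ u hu
    have h1 := hσ (t + q)
    have h2 := hσ q
    have h3 : Additive.ofMul (Abelianization.of (g⁻¹ * σ (t + q))) =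
        Additive.ofMul (Abelianization.of (σ q)) := by
      rw [map_mul, map_inv, ofMul_mul, ofMul_inv, h1, h2]
      exact neg_add_cancel_left t q
    exact h3

end P7

section P8
variable {ι : Type*} [LinearOrder ι] [Fintype ι]

theorem finite_ab {G : Type*} [Group G] (N : Subgroup G) (h : ⁅N, N⁆.FiniteIndex) :
    Finite (Abelianization N) := by
  have h2 := h.index_ne_zero
  rw [← Subgroup.map_subtype_commutator, Subgroup.index_map_subtype] at h2
  have : (commutator N).FiniteIndex := ⟨left_ne_zero_of_mul h2⟩
  exact (inferInstance : Finite (N ⧸ commutator N))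

theorem mem_comm_sub {G : Type*} [Group G] (N : Subgroup G) (x : N) :
    x ∈ commutator N ↔ (x : G) ∈ ⁅N, N⁆ := by
  rw [← Subgroup.map_subtype_commutator]
  constructor
  · intro h; exact ⟨x, h, rfl⟩
  · rintro ⟨y, hy, hyx⟩
    have : y = x := Subtype.ext hyx
    rw [← this]; exact hy

theorem both (a z b : ι) (ha : ∀ i, a ≤ i) (hz : ∀ i, i ≤ z) (hab : a ≠ b) (hbz : b ≠ z)
    (haz : a ≠ z) (H4 : ∀ i j l : ι, ∃ m, m ≠ i ∧ m ≠ j ∧ m ≠ l)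
    (N : Subgroup (MulAut (FreeGroup ι))) [N.Normal] [N.FiniteIndex]
    (hIA : IAg ι ≤ N) : ⁅N, N⁆.FiniteIndex ∧ ⁅⁅N, N⁆, ⁅N, N⁆⁆.FiniteIndex := by
  classical
  have hfg := G_fg (ι := ι)
  have f1 : ⁅N, N⁆.FiniteIndex := N_comm_finiteIndex
    (fun i j => by obtain ⟨m, h1, h2, -⟩ := H4 i j j; exact ⟨m, h1, h2⟩) N hIA
    (sprime a z b ha hz hab hbz haz N)
  refine ⟨f1, ?_⟩
  have hfi := sprime a z b ha hz hab hbz haz ⁅N, N⁆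
  apply finiteIndex_comm_of_torsion
  intro u hu
  by_contra hcon
  push Not at hcon
  have hfinA := finite_ab N f1
  have hle : ⁅N, N⁆ ≤ N := Subgroup.commutator_le_left _ _
  set M := ⁅N, N⁆ with hM
  have : Group.FG M := inferInstance
  have h2 : Group.FG (Abelianization M) :=
    Group.fg_of_surjective (f := Abelianization.of) (QuotientGroup.mk_surjective)
  obtain ⟨θ, hθ⟩ := exists_hom_int (Abelianization.of (⟨u, hu⟩ : M)) (by
    intro k hk h
    rw [← map_pow] at h
    have h3 : (⟨u, hu⟩ : M) ^ k ∈ commutator M := (QuotientGroup.eq_one_iff (G := M) _).1 h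
    rw [mem_comm_sub] at h3
    exact hcon k hk h3)
  let φ : N → ℂ := fun x => if h : (x : MulAut (FreeGroup ι)) ∈ M then
    (((θ (Abelianization.of (⟨x, h⟩ : M))).toAdd : ℤ) : ℂ) else 0
  obtain ⟨F, hF⟩ := aff_exists φ (by
    intro x hx y hy
    rw [mem_comm_sub] at hx hy
    have hxy : ((x * y : N) : MulAut (FreeGroup ι)) ∈ M := mul_mem hx hy
    have e : (⟨((x * y : N) : MulAut (FreeGroup ι)), hxy⟩ : M) = ⟨x, hx⟩ * ⟨y, hy⟩ := rfl
    simp only [φ]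
    rw [dif_pos hx, dif_pos hy, dif_pos hxy, e, map_mul, map_mul, toAdd_mul, Int.cast_add])
    ⟨u, hle hu⟩ ((mem_comm_sub _ _).2 hu) (by
    simp only [φ]
    rw [dif_pos hu]
    intro h
    apply hθ
    have h' : (θ (Abelianization.of (⟨u, hu⟩ : M))).toAdd = 0 := by exact_mod_cast h
    exact h')
  let f : MulAut (FreeGroup ι) → Aff := fun x => if h : x ∈ N then F ⟨x, h⟩ else 1
  have hf : ∀ x (h : x ∈ N), f x = F ⟨x, h⟩ := fun x h => by simp only [f]; rw [dif_pos h]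
  have hG : Good N f (N.index * Nat.card (Abelianization N)) :=
    { normal := inferInstance
      ia := hIA
      mul := fun x hx y hy => by
        rw [hf _ hx, hf _ hy, hf _ (mul_mem hx hy), ← map_mul]; rfl
      kpos := Nat.mul_pos (Nat.pos_of_ne_zero Subgroup.FiniteIndex.index_ne_zero) Nat.card_pos
      pow_mem := fun s => by rw [pow_mul]; exact N.pow_mem (N.pow_index_mem s) _
      pow_a := fun s => by
        have hs := N.pow_index_mem s
        have hs2 : s ^ (N.index * Nat.card (Abelianization N)) ∈ N := by
          rw [pow_mul]; exact N.pow_mem hs _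
        rw [hf _ hs2]
        have e : (⟨_, hs2⟩ : N) = (⟨_, hs⟩ : N) ^ Nat.card (Abelianization N) :=
          Subtype.ext (pow_mul _ _ _)
        have e2 : ∀ y : N, Aff.aHom (F y) = Abelianization.lift (Aff.aHom.comp F)
          (Abelianization.of y) := fun y => by simp
        change Aff.aHom (F _) = 1
        rw [e, e2, map_pow, pow_card_eq_one', map_one] }
  have := hG.final3 H4 hfi hu
  rw [hf u (hle hu)] at this
  exact hF this

theorem hom_real_trivial {Γ : Type*} [Group Γ] [Finite (Abelianization Γ)]
    (φ : Γ →* Multiplicative ℝ) : φ = 1 := by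
  ext g
  have e : φ g ^ Nat.card (Abelianization Γ) = 1 := by
    have : φ g = Abelianization.lift φ (Abelianization.of g) := by simp
    rw [this, ← map_pow, pow_card_eq_one', map_one]
  have e2 : (Nat.card (Abelianization Γ) : ℝ) * (φ g).toAdd = 0 := by
    have : (Nat.card (Abelianization Γ)) • (φ g).toAdd = 0 := e
    simpa using this
  have : (Nat.card (Abelianization Γ) : ℝ) ≠ 0 := by exact_mod_cast Nat.card_pos.ne'
  have h3 : (φ g).toAdd = 0 := by simpa [this] using e2
  exact h3

theorem main_fin (n : ℕ) (hn : 4 ≤ n) (Γ : Subgroup (MulAut (FreeGroup (Fin n)))) [Γ.FiniteIndex]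
    (h : IAg (Fin n) ≤ Γ) :
    Finite (Abelianization Γ) ∧ Finite (Abelianization ↥(commutator Γ)) ∧
      (∀ φ : Γ →* Multiplicative ℝ, φ = 1) ∧
      (∀ φ : ↥(commutator Γ) →* Multiplicative ℝ, φ = 1) := by
  have hN : IAg (Fin n) ≤ Γ.normalCore := Subgroup.normal_le_normalCore.2 h
  obtain ⟨f1, f2⟩ := both (ι := Fin n) ⟨0, by omega⟩ ⟨n - 1, by omega⟩ ⟨1, by omega⟩
    (fun i => by rw [Fin.le_def]; simp) (fun i => by rw [Fin.le_def]; have := i.2; simp; omega)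
    (by simp) (by simp [Fin.ext_iff]; omega) (by simp [Fin.ext_iff]; omega)
    (fun i j l => by
      by_contra hcon
      push Not at hcon
      have : (Finset.univ : Finset (Fin n)) ⊆ {i, j, l} := by
        intro m _
        by_cases h1 : m = i
        · simp [h1]
        by_cases h2 : m = j
        · simp [h2]
        simp [hcon m h1 h2]
      have := (Finset.card_le_card this).trans Finset.card_le_three
      simp at this
      omega) Γ.normalCore hN
  have hle := Γ.normalCore_le
  have l1 : ⁅Γ.normalCore, Γ.normalCore⁆ ≤ ⁅Γ, Γ⁆ := Subgroup.commutator_mono hle hle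
  have l2 := Subgroup.commutator_mono l1 l1
  have F1 : Finite (Abelianization Γ) := finite_ab Γ (Subgroup.finiteIndex_of_le l1)
  have g2 : ⁅⁅Γ, Γ⁆, ⁅Γ, Γ⁆⁆.FiniteIndex := Subgroup.finiteIndex_of_le l2
  have F2 : Finite (Abelianization ↥(commutator Γ)) := by
    apply finite_ab (commutator Γ)
    have h2 := g2.index_ne_zero
    have e : ⁅commutator Γ, commutator Γ⁆.map Γ.subtype = ⁅⁅Γ, Γ⁆, ⁅Γ, Γ⁆⁆ := by
      rw [Subgroup.map_commutator, Subgroup.map_subtype_commutator]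
    rw [← e, Subgroup.index_map_subtype] at h2
    exact ⟨left_ne_zero_of_mul h2⟩
  exact ⟨F1, F2, fun φ => hom_real_trivial φ, fun φ => hom_real_trivial φ⟩

end P8
end FA

/-- For `n ≥ 4`, if `Γ` is a finite index subgroup of `Aut(Fₙ)`
containing `IAₙ`, then both `Γ` and its commutator subgroup `[Γ, Γ]` have finite
abelianizations; in particular every group homomorphism from `Γ` or from `[Γ, Γ]` to
`(ℝ, +)` is trivial. -/
theorem finite_index_contains_IA_finite_abelianizations
    (n : ℕ) (hn : 4 ≤ n)
    (Γ : Subgroup (AutF n)) [Γ.FiniteIndex]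
    (h : IA n ≤ Γ) :
    Finite (Abelianization Γ) ∧ Finite (Abelianization ↥(commutator Γ)) ∧
      (∀ φ : Γ →* Multiplicative ℝ, φ = 1) ∧
      (∀ φ : ↥(commutator Γ) →* Multiplicative ℝ, φ = 1) := by
  exact FA.main_fin n hn Γ (fun x hx => h hx)
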